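/- arXiv:1811.04843 — 7 statements merged into one kernel-verified Lean document; each statement's English description precedes it below -/
import Mathlib

section
/- Let p be a prime number, V a finite-dimensional vector space over ℚ, S = Sym(V) the symmetric algebra with its standard grading, W a finite subgroup of GL(V) acting on S by graded algebra automorphisms, and σ ∈ GL(V) an element of finite order s ≥ 1 normalizing W (σWσ⁻¹ = W). Let φ : S → S be the graded ℚ-algebra endomorphism determined by φ(v) = p·σ⁻¹(v) for v ∈ V, so that φ(f) = p^d·σ⁻¹(f) for every homogeneous f of degree d; then φ preserves the invariant ring S^W. Let 𝓘 be the ideal of S^W generated by the elements f − φ(f) for f in the augmentation ideal S^W₊ (the invariants with vanishing constant term). Then 𝓘 = S^W₊. -/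
open MvPolynomial

/-!
On a homogeneous invariant `f` of degree `d > 0` the endomorphism `φ` satisfies
`φ ^ s f = p ^ (d * s) • f`, because `σ ^ s = 1`. Hence the geometric sum
`g = (1 - p ^ (d * s))⁻¹ • ∑ i < s, φ ^ i f` is an invariant with `g - φ g = f`. As the invariants
form a graded subring, `1 - φ` already maps `S^W₊` onto itself, before any ideal is generated.
-/

theorem le_of_isHomogeneous_of_forall_mem {R M ι : Type*} [Semiring R] [AddCommMonoid M]
    [Module R M] [DecidableEq ι] (ℳ : ι → Submodule R M) [DirectSum.Decomposition ℳ]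
    {P Q : Submodule R M} (hP : P.IsHomogeneous ℳ)
    (h : ∀ i, ∀ x ∈ P, x ∈ ℳ i → x ∈ Q) : P ≤ Q := by
  classical
  intro x hx
  rw [← DirectSum.sum_support_decompose ℳ x]
  exact Q.sum_mem fun i _ => h i _ (hP i hx) (SetLike.coe_mem _)

theorem pow_apply_eq_pow_smul_pow_apply {R M : Type*} [CommSemiring R] [AddCommMonoid M]
    [Module R M] {ψ τ : Module.End R M} {N : Submodule R M} {c : R}
    (hτ : ∀ x ∈ N, τ x ∈ N) (hψ : ∀ x ∈ N, ψ x = c • τ x) (k : ℕ) {x : M} (hx : x ∈ N) :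
    (ψ ^ k) x = c ^ k • (τ ^ k) x := by
  induction k with
  | zero => simp
  | succ k ih =>
    rw [pow_succ', Module.End.mul_apply, ih, map_smul,
      hψ _ (Module.End.pow_apply_mem_of_forall_mem k hτ x hx), smul_smul, ← pow_succ,
      pow_succ' τ, Module.End.mul_apply]

section LinearAlgebra

variable {R M : Type*} [CommRing R] [AddCommGroup M] [Module R M]

theorem mem_map_one_sub_of_pow_apply_eq_smul {ψ : Module.End R M} {P : Submodule R M}
    (hP : ∀ x ∈ P, ψ x ∈ P) {s : ℕ} {c : R} (hc : IsUnit (1 - c)) {x : M} (hx : x ∈ P)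
    (hψ : (ψ ^ s) x = c • x) : x ∈ P.map (1 - ψ) := by
  obtain ⟨u, hu⟩ := hc
  have hsum : ∑ i ∈ Finset.range s, (ψ ^ i) x ∈ P :=
    P.sum_mem fun i _ => Module.End.pow_apply_mem_of_forall_mem i hP x hx
  have htelescope : (1 - ψ) (∑ i ∈ Finset.range s, (ψ ^ i) x) = (1 - c) • x := by
    rw [← LinearMap.sum_apply, ← Module.End.mul_apply, mul_neg_geom_sum, LinearMap.sub_apply,
      hψ, Module.End.one_apply, sub_smul, one_smul]
  refine ⟨(↑u⁻¹ : R) • ∑ i ∈ Finset.range s, (ψ ^ i) x, P.smul_mem _ hsum, ?_⟩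
  rw [map_smul, htelescope, ← hu, smul_smul, u.inv_mul, one_smul]

variable {ι : Type*} [DecidableEq ι] (ℳ : ι → Submodule R M) [DirectSum.Decomposition ℳ]

theorem map_one_sub_eq_of_isHomogeneous {ψ τ : Module.End R M} {s : ℕ} {c : ι → R}
    {P : Submodule R M} (hP : P.IsHomogeneous ℳ) (hτℳ : ∀ i, ∀ x ∈ ℳ i, τ x ∈ ℳ i)
    (hτP : ∀ x ∈ P, τ x ∈ P) (hτs : τ ^ s = 1) (hψ : ∀ i, ∀ x ∈ ℳ i, ψ x = c i • τ x)
    (hc : ∀ i, Disjoint P (ℳ i) ∨ IsUnit (1 - c i ^ s)) : P.map (1 - ψ) = P := by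
  have hψP : P ≤ P.comap ψ := le_of_isHomogeneous_of_forall_mem ℳ hP fun i x hxP hxi => by
    rw [Submodule.mem_comap, hψ i x hxi]
    exact P.smul_mem _ (hτP x hxP)
  refine le_antisymm ?_ (le_of_isHomogeneous_of_forall_mem ℳ hP fun i x hxP hxi => ?_)
  · rintro _ ⟨x, hx, rfl⟩
    exact P.sub_mem hx (hψP hx)
  · rcases hc i with hdisj | hunit
    · rw [Submodule.disjoint_def.mp hdisj x hxP hxi]
      exact zero_mem _
    · refine mem_map_one_sub_of_pow_apply_eq_smul (s := s) hψP hunit hxP ?_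
      rw [pow_apply_eq_pow_smul_pow_apply (hτℳ i) (hψ i) s hxi, hτs, Module.End.one_apply]

end LinearAlgebra

theorem smul_inv_smul_eq_of_forall_conj_mem {G α : Type*} [Group G] [MulAction G α] {W : Set G}
    {g : G} (hg : ∀ w ∈ W, g * w * g⁻¹ ∈ W) {x : α} (hx : ∀ w ∈ W, w • x = x) :
    ∀ w ∈ W, w • g⁻¹ • x = g⁻¹ • x := by
  intro w hw
  rw [eq_inv_smul_iff, smul_smul, smul_smul]
  exact hx _ (hg w hw)

section GradedRing

variable {ι A B S T F : Type*} [DecidableEq ι] [Semiring A] [Semiring B]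
  [SetLike S A] [AddSubmonoidClass S A] [SetLike T B] [AddSubmonoidClass T B]

section Maps

variable [AddMonoid ι] {𝒜 : ι → S} {ℬ : ι → T} [GradedRing 𝒜] [GradedRing ℬ]
  [FunLike F A B] [RingHomClass F A B]

theorem map_decompose_of_forall_map_mem {f : F} (hf : ∀ i, ∀ x ∈ 𝒜 i, f x ∈ ℬ i) (x : A) (i : ι) :
    f (DirectSum.decompose 𝒜 x i) = DirectSum.decompose ℬ (f x) i :=
  map_directSumDecompose 𝒜 ℬ (⟨(f : A →+* B), fun {i x} => hf i x⟩ : 𝒜 →+*ᵍ ℬ)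

theorem mem_of_map_mem_of_injective {f : F} (hf : ∀ i, ∀ x ∈ 𝒜 i, f x ∈ ℬ i)
    (hinj : Function.Injective f) {i : ι} {x : A} (hx : f x ∈ ℬ i) : x ∈ 𝒜 i := by
  have hcomp : (DirectSum.decompose 𝒜 x i : A) = x := hinj <| by
    rw [map_decompose_of_forall_map_mem hf, DirectSum.decompose_of_mem_same ℬ hx]
  rw [← hcomp]
  exact SetLike.coe_mem _

end Maps

variable (𝒜 : ι → S) [FunLike F A A] [RingHomClass F A A]

theorem isHomogeneous_of_mem_iff_forall_apply_eq [AddMonoid ι] [GradedRing 𝒜] {W : Set F}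
    (hW : ∀ w ∈ W, ∀ i, ∀ x ∈ 𝒜 i, w x ∈ 𝒜 i) {P : Type*} [SetLike P A] {p : P}
    (hp : ∀ x, x ∈ p ↔ ∀ w ∈ W, w x = x) : DirectSum.SetLike.IsHomogeneous 𝒜 p := by
  intro i x hx
  rw [hp] at hx ⊢
  intro w hw
  rw [map_decompose_of_forall_map_mem (hW w hw), hx w hw]

variable [AddCommMonoid ι] [PartialOrder ι] [CanonicallyOrderedAdd ι] [GradedRing 𝒜]

theorem eq_zero_of_mem_irrelevant_of_mem_zero {x : A} (hx : x ∈ HomogeneousIdeal.irrelevant 𝒜)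
    (hx₀ : x ∈ 𝒜 0) : x = 0 := by
  rwa [HomogeneousIdeal.mem_irrelevant_iff, GradedRing.proj_apply,
    DirectSum.decompose_of_mem_same 𝒜 hx₀] at hx

theorem map_mem_irrelevant {f : F} (hf : ∀ i, ∀ x ∈ 𝒜 i, f x ∈ 𝒜 i) {x : A}
    (hx : x ∈ HomogeneousIdeal.irrelevant 𝒜) : f x ∈ HomogeneousIdeal.irrelevant 𝒜 := by
  rw [HomogeneousIdeal.mem_irrelevant_iff, GradedRing.proj_apply] at hx ⊢
  rw [← map_decompose_of_forall_map_mem hf, hx, map_zero]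

end GradedRing

section GradedAlgebra

variable {R A : Type*} [CommRing R] [Ring A] [Algebra R A] (𝒜 : ℕ → Submodule R A)
  [GradedAlgebra 𝒜]

theorem map_one_sub_inf_irrelevant_eq {q : R} (hq : ∀ k ≠ 0, IsUnit (1 - q ^ k))
    {B : Subalgebra R A} (hB : DirectSum.SetLike.IsHomogeneous 𝒜 B) {τ : A ≃ₐ[R] A}
    (hτ : ∀ d, ∀ f ∈ 𝒜 d, τ f ∈ 𝒜 d) (hτB : ∀ f ∈ B, τ f ∈ B) {s : ℕ} (hs : s ≠ 0)
    (hτs : τ ^ s = 1) {φ : A →ₗ[R] A} (hφ : ∀ d, ∀ f ∈ 𝒜 d, φ f = q ^ d • τ f) :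
    (B.toSubmodule ⊓ (HomogeneousIdeal.irrelevant 𝒜).toIdeal.restrictScalars R).map (1 - φ) =
      B.toSubmodule ⊓ (HomogeneousIdeal.irrelevant 𝒜).toIdeal.restrictScalars R := by
  refine map_one_sub_eq_of_isHomogeneous 𝒜 (τ := τ.toLinearMap) (s := s) ?_ hτ ?_ ?_ hφ ?_
  · exact fun d f hf => ⟨hB d hf.1, (HomogeneousIdeal.irrelevant 𝒜).isHomogeneous d hf.2⟩
  · exact fun f hf => ⟨hτB f hf.1, map_mem_irrelevant 𝒜 hτ hf.2⟩
  · rw [← AlgEquiv.pow_toLinearMap, hτs, AlgEquiv.one_toLinearMap]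
  · intro d
    rcases eq_or_ne d 0 with rfl | hd
    · exact Or.inl (Submodule.disjoint_def.2 fun f hf =>
        eq_zero_of_mem_irrelevant_of_mem_zero 𝒜 hf.2)
    · rw [← pow_mul]
      exact Or.inr (hq _ (mul_ne_zero hd hs))

theorem stmt_0_general {q : R} (hq : ∀ k ≠ 0, IsUnit (1 - q ^ k)) (W : Subgroup (A ≃ₐ[R] A))
    (hWgraded : ∀ w ∈ W, ∀ d, ∀ f ∈ 𝒜 d, w f ∈ 𝒜 d) (σ : A ≃ₐ[R] A)
    (hσgraded : ∀ d, ∀ f ∈ 𝒜 d, σ f ∈ 𝒜 d) (s : ℕ) (hs : 1 ≤ s) (hσord : σ ^ s = 1)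
    (hnorm : ∀ w ∈ W, σ * w * σ⁻¹ ∈ W) (φ : A →ₗ[R] A)
    (hφ : ∀ d, ∀ f ∈ 𝒜 d, φ f = q ^ d • σ⁻¹ f) (SW : Subalgebra R A)
    (hSW : ∀ f, f ∈ SW ↔ ∀ w ∈ W, w f = f) :
    Ideal.span {x : SW | ∃ f ∈ SW, f ∈ HomogeneousIdeal.irrelevant 𝒜 ∧ (x : A) = f - φ f} =
      (HomogeneousIdeal.irrelevant 𝒜).toIdeal.comap SW.val := by
  have hSWhom : DirectSum.SetLike.IsHomogeneous 𝒜 SW :=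
    isHomogeneous_of_mem_iff_forall_apply_eq 𝒜 (W := (W : Set (A ≃ₐ[R] A))) hWgraded hSW
  have hσinv : ∀ d, ∀ f ∈ 𝒜 d, σ⁻¹ f ∈ 𝒜 d := fun d f hf =>
    mem_of_map_mem_of_injective hσgraded σ.injective (by rwa [← AlgEquiv.mul_apply, mul_inv_cancel])
  have hσSW : ∀ f ∈ SW, σ⁻¹ f ∈ SW := fun f hf =>
    (hSW _).2 <| smul_inv_smul_eq_of_forall_conj_mem (W := (W : Set (A ≃ₐ[R] A))) hnorm <|
      (hSW f).1 hf
  have hmap := map_one_sub_inf_irrelevant_eq 𝒜 hq hSWhom hσinv hσSW (by lia : s ≠ 0)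
    (by rw [inv_pow, hσord, inv_one]) hφ
  have hset : {x : SW | ∃ f ∈ SW, f ∈ HomogeneousIdeal.irrelevant 𝒜 ∧ (x : A) = f - φ f} =
      (HomogeneousIdeal.irrelevant 𝒜).toIdeal.comap SW.val := by
    ext x
    constructor
    · rintro ⟨f, hfSW, hf, hx⟩
      change (x : A) ∈ HomogeneousIdeal.irrelevant 𝒜
      rw [hx]
      exact (hmap.le ⟨f, ⟨hfSW, hf⟩, rfl⟩).2
    · intro hx
      obtain ⟨f, ⟨hfSW, hf⟩, hfx⟩ := hmap.ge ⟨x.2, hx⟩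
      exact ⟨f, hfSW, hf, hfx.symm⟩
  rw [hset, Ideal.span_eq]

end GradedAlgebra

attribute [local instance] MvPolynomial.gradedAlgebra

theorem isUnit_one_sub_pow_of_one_lt {K : Type*} [Field K] [LinearOrder K] [IsStrictOrderedRing K]
    {x : K} (hx : 1 < x) {k : ℕ} (hk : k ≠ 0) : IsUnit (1 - x ^ k) :=
  (sub_ne_zero.2 (one_lt_pow₀ hx hk).ne).isUnit

theorem mem_irrelevant_homogeneousSubmodule_iff {ι R : Type*} [CommSemiring R]
    {f : MvPolynomial ι R} :
    f ∈ HomogeneousIdeal.irrelevant (homogeneousSubmodule ι R) ↔ constantCoeff f = 0 := by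
  rw [HomogeneousIdeal.mem_irrelevant_iff, GradedRing.proj_apply,
    ← DirectSum.Decomposition.decompose'_eq, decomposition.decompose'_apply,
    homogeneousComponent_zero, C_eq_zero, constantCoeff_eq]

/-- Let `p` be a prime, `V` a finite-dimensional `ℚ`-vector space
(modelled as `V = ℚⁿ`), and `S = Sym(V) = ℚ[X_0,…,X_{n−1}]` with its standard grading.
Let `W` be a finite group of graded algebra automorphisms of `S` (equivalently, a finite
subgroup of `GL(V)` acting functorially), and `σ` a graded algebra automorphism of finite
order `s ≥ 1` normalizing `W`.  Let `φ` be the graded algebra endomorphism with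
`φ(f) = p^d · σ⁻¹(f)` for `f` homogeneous of degree `d`; it preserves the invariant ring
`S^W`.  Then the ideal `𝓘` of `S^W` generated by the elements `f − φ(f)`, for `f` in the
augmentation ideal `S^W₊`, is equal to `S^W₊` (the kernel of the constant-coefficient map
on `S^W`). -/
theorem stmt_0 (p : ℕ) (hp : p.Prime) (n : ℕ)
    (W : Subgroup (MvPolynomial (Fin n) ℚ ≃ₐ[ℚ] MvPolynomial (Fin n) ℚ))
    (hWfin : (W : Set (MvPolynomial (Fin n) ℚ ≃ₐ[ℚ] MvPolynomial (Fin n) ℚ)).Finite)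
    (hWgraded : ∀ w ∈ W, ∀ d : ℕ, ∀ f ∈ homogeneousSubmodule (Fin n) ℚ d,
      w f ∈ homogeneousSubmodule (Fin n) ℚ d)
    (σ : MvPolynomial (Fin n) ℚ ≃ₐ[ℚ] MvPolynomial (Fin n) ℚ)
    (hσgraded : ∀ d : ℕ, ∀ f ∈ homogeneousSubmodule (Fin n) ℚ d,
      σ f ∈ homogeneousSubmodule (Fin n) ℚ d)
    (s : ℕ) (hs : 1 ≤ s) (hσord : σ ^ s = 1)
    (hnorm : ∀ w ∈ W, σ * w * σ⁻¹ ∈ W)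
    (φ : MvPolynomial (Fin n) ℚ →ₐ[ℚ] MvPolynomial (Fin n) ℚ)
    (hφ : ∀ d : ℕ, ∀ f ∈ homogeneousSubmodule (Fin n) ℚ d,
      φ f = (p : ℚ) ^ d • σ⁻¹ f)
    (SW : Subalgebra ℚ (MvPolynomial (Fin n) ℚ))
    (hSW : ∀ f, f ∈ SW ↔ ∀ w ∈ W, w f = f) :
    Ideal.span {x : SW | ∃ f : MvPolynomial (Fin n) ℚ,
        f ∈ SW ∧ constantCoeff f = 0 ∧ (x : MvPolynomial (Fin n) ℚ) = f - φ f}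
      = RingHom.ker ((constantCoeff : MvPolynomial (Fin n) ℚ →+* ℚ).comp
          SW.val.toRingHom) := by
  simpa only [AlgHom.toLinearMap_apply, mem_irrelevant_homogeneousSubmodule_iff] using
    (stmt_0_general _ (fun _ => isUnit_one_sub_pow_of_one_lt (mod_cast hp.one_lt)) W hWgraded σ
      hσgraded s hs hσord hnorm φ.toLinearMap hφ SW hSW).trans
      (Ideal.ext fun _ => mem_irrelevant_homogeneousSubmodule_iff)
end

section
/- Let V be a finite-dimensional ℚ-vector space and W ⊆ GL(V) a finite subgroup generated by reflections, acting faithfully on V; let S = Sym(V) and S^W the ring of W-invariants. For each w ∈ W let i_w : S ⊗_{S^W} S → S be the ℚ-algebra homomorphism determined by f ⊗ g ↦ f·w(g). Then the combined map ∏_{w∈W} i_w : S ⊗_{S^W} S → ∏_{w∈W} S is injective. -/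
open MvPolynomial TensorProduct

/-- The graded algebra automorphism of `Sym(V) = ℚ[X_0,…,X_{n−1}]` (for `V = ℚⁿ`) induced
functorially by a linear automorphism `g` of `V`: it sends `X i ↦ Σ_j (g e_i)_j · X j`. -/
noncomputable def polyActE {n : ℕ} (g : (Fin n → ℚ) ≃ₗ[ℚ] (Fin n → ℚ)) :
    MvPolynomial (Fin n) ℚ →ₐ[ℚ] MvPolynomial (Fin n) ℚ :=
  aeval fun i => ∑ j, C (g (Pi.single i 1) j) * X j

/-- A reflection of `V = ℚⁿ`: an element of finite order fixing a hyperplane pointwise. -/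
def IsReflection {n : ℕ} (g : (Fin n → ℚ) ≃ₗ[ℚ] (Fin n → ℚ)) : Prop :=
  IsOfFinOrder g ∧ ∃ H : Submodule ℚ (Fin n → ℚ), IsCoatom H ∧ ∀ x ∈ H, g x = x

/-! The twisted multiplications `i_w` satisfy `i_{ws}(x) = i_w(x) + w(a) · i_w((1 ⊗ D) x)` when `s`
is a reflection with root `a` and divided difference `D = (s - 1) / a`. So the common kernel of the
`i_w` is stable under `1 ⊗ D`, which lowers the degree of the right factor. By induction on that
degree, `1 ⊗ D` kills a given `x` in the common kernel, i.e. `1 ⊗ s` fixes it. Hence `1 ⊗ W` fixes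
`x`, and averaging over `W` moves the right factor into the invariants: `|W| • x = f ⊗ 1`, where
`f = i_1(f ⊗ 1) = |W| • i_1(x) = 0`. -/

section TwistedMul

variable (R : Type*) {S W : Type*} [CommRing R] [CommRing S] [Algebra R S] [Group W]
  [MulSemiringAction W S] [SMulCommClass W R S]

/-- The map `i_w : S ⊗[R] S → S`, `f ⊗ g ↦ f * w • g`, as a linear map over the left factor. -/
noncomputable def twistedMul (w : W) : S ⊗[R] S →ₗ[S] S :=
  (DistribSMul.toLinearMap R S w).liftBaseChange S

@[simp]
lemma twistedMul_tmul (w : W) (f g : S) : twistedMul R w (f ⊗ₜ g) = f * w • g := rfl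

variable (S W) in
/-- The common kernel of the maps `i_w`. -/
noncomputable def twistedKer : Submodule S (S ⊗[R] S) := ⨅ w : W, LinearMap.ker (twistedMul R w)

variable (S W) in
/-- The action of `W` on `S ⊗[R] S` through the right factor. -/
noncomputable def rightRep : Representation S W (S ⊗[R] S) :=
  (Module.End.baseChangeHom R S S : Module.End R S →* Module.End S (S ⊗[R] S)).comp
    (DistribMulAction.toModuleEnd R S)

@[simp]
lemma rightRep_tmul (w : W) (f g : S) : rightRep R S W w (f ⊗ₜ g) = f ⊗ₜ (w • g) := rfl

variable {R}

lemma mem_twistedKer {x : S ⊗[R] S} :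
    x ∈ twistedKer R S W ↔ ∀ w : W, twistedMul R w x = 0 := by
  simp only [twistedKer, Submodule.mem_iInf, LinearMap.mem_ker]

lemma eq_zero_of_tmul_one_mem_twistedKer {f : S} (hf : f ⊗ₜ[R] (1 : S) ∈ twistedKer R S W) :
    f = 0 := by
  simpa using mem_twistedKer.1 hf 1

section DividedDifference

variable {s : W} {a : S} {D : S →ₗ[R] S}

lemma twistedMul_mul (hD : ∀ f, s • f = f + a * D f) (w : W) (x : S ⊗[R] S) :
    twistedMul R (w * s) x = twistedMul R w x + w • a * twistedMul R w (D.baseChange S x) := by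
  suffices twistedMul R (w * s) =
      twistedMul R w + (w • a) • twistedMul R w ∘ₗ D.baseChange S from LinearMap.congr_fun this x
  ext g
  simp [mul_smul, hD]

lemma baseChange_mem_twistedKer [IsDomain S] (ha : a ≠ 0) (hD : ∀ f, s • f = f + a * D f)
    {x : S ⊗[R] S} (hx : x ∈ twistedKer R S W) : D.baseChange S x ∈ twistedKer R S W := by
  rw [mem_twistedKer] at hx ⊢
  intro w
  have h := twistedMul_mul hD w x
  rw [hx, hx, zero_add, eq_comm, mul_eq_zero] at h
  exact h.resolve_left ((smul_ne_zero_iff_ne w).2 ha)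

lemma rightRep_apply_eq_self_of_baseChange_eq_zero (hD : ∀ f, s • f = f + a * D f)
    {x : S ⊗[R] S} (hx : D.baseChange S x = 0) : rightRep R S W s x = x := by
  have hs : rightRep R S W s = LinearMap.id + (LinearMap.mulLeft R a).baseChange S ∘ₗ
      D.baseChange S := by
    ext g
    simp [hD, TensorProduct.tmul_add]
  simp [hs, hx]

end DividedDifference

lemma rightRep_apply_eq_self_of_closure_eq_top {G : Set W} (hG : Subgroup.closure G = ⊤)
    {x : S ⊗[R] S} (hx : ∀ s ∈ G, rightRep R S W s x = x) (w : W) : rightRep R S W w x = x := by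
  have hw : w ∈ Subgroup.closure G := hG ▸ Subgroup.mem_top w
  induction hw using Subgroup.closure_induction with
  | mem s hs => exact hx s hs
  | one => simp
  | mul u v _ _ hu hv => rw [map_mul, Module.End.mul_apply, hv, hu]
  | inv u _ hu => rw [← hu, Representation.inv_self_apply, hu]

lemma exists_sum_rightRep_eq_tmul_one [Fintype W] [Algebra.IsInvariant R S W] (x : S ⊗[R] S) :
    ∃ f : S, ∑ w, rightRep R S W w x = f ⊗ₜ 1 := by
  induction x with
  | zero => exact ⟨0, by simp⟩
  | tmul f g =>
    have hinv (u : W) : u • ∑ w : W, w • g = ∑ w : W, w • g := by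
      simp only [Finset.smul_sum, smul_smul]
      exact Fintype.sum_equiv (Equiv.mulLeft u) _ _ fun _ ↦ rfl
    obtain ⟨r, hr⟩ := Algebra.IsInvariant.isInvariant (A := R) _ hinv
    refine ⟨r • f, ?_⟩
    simp only [rightRep_tmul, ← TensorProduct.tmul_sum, ← hr, Algebra.algebraMap_eq_smul_one,
      TensorProduct.smul_tmul]
  | add x y hx hy =>
    obtain ⟨f, hf⟩ := hx
    obtain ⟨g, hg⟩ := hy
    exact ⟨f + g, by simp only [map_add, Finset.sum_add_distrib, hf, hg, TensorProduct.add_tmul]⟩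

lemma eq_zero_of_mem_twistedKer_of_mem_invariants [Finite W] [Algebra.IsInvariant R S W]
    (hcard : IsUnit (Nat.card W : R)) {x : S ⊗[R] S} (hx : x ∈ twistedKer R S W)
    (hinv : x ∈ (rightRep R S W).invariants) : x = 0 := by
  cases nonempty_fintype W
  obtain ⟨f, hf⟩ := exists_sum_rightRep_eq_tmul_one (W := W) x
  have hsum : Nat.card W • x = f ⊗ₜ 1 := by
    rw [← hf, Finset.sum_congr rfl fun w _ ↦ hinv w]
    simp
  have hf0 : f = 0 :=
    eq_zero_of_tmul_one_mem_twistedKer (W := W) (hsum ▸ nsmul_mem hx (Nat.card W))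
  rwa [hf0, TensorProduct.zero_tmul, ← Nat.cast_smul_eq_nsmul R, hcard.smul_eq_zero] at hsum

end TwistedMul

section Reflection

variable {K S : Type*} [CommRing K] [CommRing S] [Algebra K S] {V : Submodule K S} {a : S}

/-- The endomorphism `φ` acts on the submodule `V` as a reflection with root `a`, possibly
degenerate: the identity and transvections are allowed. -/
structure IsReflectionAlong (V : Submodule K S) (a : S) (φ : S →ₐ[K] S) : Prop where
  root_mem : a ∈ V
  exists_eq_add_smul : ∀ v ∈ V, ∃ c : K, φ v = v + c • a

lemma IsReflectionAlong.dvd_sub {φ : S →ₐ[K] S} (hφ : IsReflectionAlong V a φ)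
    (hV : Algebra.adjoin K (V : Set S) = ⊤) (f : S) : a ∣ φ f - f := by
  have heq : (Ideal.Quotient.mkₐ K (Ideal.span {a})).comp φ =
      Ideal.Quotient.mkₐ K (Ideal.span {a}) := by
    refine AlgHom.ext_of_adjoin_eq_top hV fun v hv ↦ ?_
    obtain ⟨c, hc⟩ := hφ.exists_eq_add_smul v hv
    refine Ideal.Quotient.eq.2 (Ideal.mem_span_singleton.2 ?_)
    simp [hc, Algebra.smul_def]
  exact Ideal.mem_span_singleton.1 (Ideal.Quotient.eq.1 (DFunLike.congr_fun heq f))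

lemma exists_mul_apply_eq_of_forall_dvd [IsDomain S] (ha : a ≠ 0) {ψ : S →ₗ[K] S}
    (hψ : ∀ f, a ∣ ψ f) : ∃ D : S →ₗ[K] S, ∀ f, ψ f = a * D f := by
  choose D hD using hψ
  refine ⟨⟨⟨D, fun f g ↦ mul_left_cancel₀ ha ?_⟩, fun c f ↦ mul_left_cancel₀ ha ?_⟩, hD⟩
  · rw [← hD, map_add, hD, hD, mul_add]
  · rw [← hD, map_smul, hD, RingHom.id_apply, mul_smul_comm]

/-- The elements of `S` that are polynomials of degree at most `k` in elements of `V`. -/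
def degreeLE (V : Submodule K S) (k : ℕ) : Submodule K S := (1 ⊔ V) ^ k

lemma degreeLE_mono (V : Submodule K S) : Monotone (degreeLE V) :=
  fun _ _ h ↦ pow_le_pow_right' le_sup_left h

lemma exists_mem_degreeLE (hV : Algebra.adjoin K (V : Set S) = ⊤) (f : S) :
    ∃ k, f ∈ degreeLE V k := by
  have hf : f ∈ Algebra.adjoin K (V : Set S) := hV ▸ Algebra.mem_top
  induction hf using Algebra.adjoin_induction with
  | mem v hv => exact ⟨1, by simpa [degreeLE] using Submodule.mem_sup_right hv⟩
  | algebraMap c => exact ⟨0, by simp [degreeLE]⟩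
  | add f g _ _ hf hg =>
    obtain ⟨k, hk⟩ := hf
    obtain ⟨l, hl⟩ := hg
    exact ⟨max k l, add_mem (degreeLE_mono V (le_max_left k l) hk)
      (degreeLE_mono V (le_max_right k l) hl)⟩
  | mul f g _ _ hf hg =>
    obtain ⟨k, hk⟩ := hf
    obtain ⟨l, hl⟩ := hg
    exact ⟨k + l, by simpa only [degreeLE, pow_add] using Submodule.mul_mem_mul hk hl⟩

lemma IsReflectionAlong.apply_mem_one_sup {φ : S →ₐ[K] S} (hφ : IsReflectionAlong V a φ) {g : S}
    (hg : g ∈ 1 ⊔ V) : φ g ∈ 1 ⊔ V := by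
  suffices 1 ⊔ V ≤ (1 ⊔ V).comap φ.toLinearMap from this hg
  refine sup_le (Submodule.one_le.2 ?_) fun v hv ↦ ?_
  · simpa using Submodule.mem_sup_left (Submodule.one_le.1 le_rfl)
  · obtain ⟨c, hc⟩ := hφ.exists_eq_add_smul v hv
    exact Submodule.mem_sup_right (hc ▸ add_mem hv (V.smul_mem c hφ.root_mem) : φ v ∈ V)

section DividedDifference

variable [IsDomain S] {φ : S →ₐ[K] S} {D : S →ₗ[K] S}

lemma dividedDifference_mul (ha : a ≠ 0) (hD : ∀ f, φ f = f + a * D f) (f g : S) :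
    D (f * g) = D f * φ g + f * D g := by
  have h := hD (f * g)
  rw [map_mul, hD f] at h
  apply mul_left_cancel₀ ha
  linear_combination -h + f * hD g

lemma IsReflectionAlong.dividedDifference_mem_one (hφ : IsReflectionAlong V a φ) (ha : a ≠ 0)
    (hD : ∀ f, φ f = f + a * D f) {g : S} (hg : g ∈ 1 ⊔ V) : D g ∈ (1 : Submodule K S) := by
  suffices 1 ⊔ V ≤ (1 : Submodule K S).comap D from this hg
  refine sup_le (Submodule.one_le.2 ?_) fun v hv ↦ ?_
  · have hD_one : D 1 = 0 := by simpa [ha] using hD 1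
    simp [hD_one]
  · obtain ⟨c, hc⟩ := hφ.exists_eq_add_smul v hv
    refine Submodule.mem_one.2 ⟨c, mul_left_cancel₀ ha (add_left_cancel (a := v) ?_)⟩
    rw [← hD, hc, Algebra.smul_def, mul_comm]

lemma IsReflectionAlong.dividedDifference_mem_degreeLE (hφ : IsReflectionAlong V a φ) (ha : a ≠ 0)
    (hD : ∀ f, φ f = f + a * D f) {k : ℕ} {f : S} (hf : f ∈ degreeLE V (k + 1)) :
    D f ∈ degreeLE V k := by
  induction k generalizing f with
  | zero =>
    rw [degreeLE, zero_add, pow_one] at hf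
    simpa only [degreeLE, pow_zero] using hφ.dividedDifference_mem_one ha hD hf
  | succ k ih =>
    rw [degreeLE, pow_succ] at hf
    induction hf using Submodule.mul_induction_on' with
    | mem_mul_mem f hf g hg =>
      obtain ⟨c, hc⟩ := Submodule.mem_one.1 (hφ.dividedDifference_mem_one ha hD hg)
      have hfg : D f * φ g ∈ degreeLE V (k + 1) := by
        simpa only [degreeLE, pow_succ] using
          Submodule.mul_mem_mul (ih hf) (hφ.apply_mem_one_sup hg)
      rw [dividedDifference_mul ha hD, ← hc, mul_comm f, ← Algebra.smul_def]
      exact add_mem hfg (Submodule.smul_mem _ c hf)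
    | add f _ g _ hf hg => exact map_add D f g ▸ add_mem hf hg

end DividedDifference

end Reflection

section Filtration

variable {K S W : Type*} (R : Type*) [CommRing K] [CommRing R] [CommRing S] [Algebra K S]
  [Algebra R S]

/-- The tensors in `S ⊗[R] S` whose right factors have degree at most `k` in `V`. -/
def rightDegreeLE (V : Submodule K S) (k : ℕ) : Submodule S (S ⊗[R] S) :=
  Submodule.span S ((fun g ↦ 1 ⊗ₜ[R] g) '' degreeLE V k)

variable {R} {V : Submodule K S} {k : ℕ}

lemma rightDegreeLE_mono : Monotone (rightDegreeLE R V) :=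
  fun _ _ h ↦ Submodule.span_mono (Set.image_mono (degreeLE_mono V h))

lemma exists_mem_rightDegreeLE (hV : Algebra.adjoin K (V : Set S) = ⊤) (x : S ⊗[R] S) :
    ∃ k, x ∈ rightDegreeLE R V k := by
  induction x with
  | zero => exact ⟨0, zero_mem _⟩
  | tmul f g =>
    obtain ⟨k, hk⟩ := exists_mem_degreeLE hV g
    have hg : 1 ⊗ₜ[R] g ∈ rightDegreeLE R V k := Submodule.subset_span ⟨g, hk, rfl⟩
    exact ⟨k, by simpa [TensorProduct.smul_tmul'] using Submodule.smul_mem _ f hg⟩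
  | add x y hx hy =>
    obtain ⟨k, hk⟩ := hx
    obtain ⟨l, hl⟩ := hy
    exact ⟨max k l, add_mem (rightDegreeLE_mono (le_max_left k l) hk)
      (rightDegreeLE_mono (le_max_right k l) hl)⟩

lemma exists_eq_tmul_one_of_mem_rightDegreeLE_zero [Algebra K R] [IsScalarTower K R S]
    {x : S ⊗[R] S} (hx : x ∈ rightDegreeLE R V 0) : ∃ f : S, x = f ⊗ₜ 1 := by
  induction hx using Submodule.span_induction with
  | mem x hx =>
    obtain ⟨g, hg, rfl⟩ := hx
    rw [degreeLE, pow_zero] at hg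
    obtain ⟨c, rfl⟩ := Submodule.mem_one.1 hg
    exact ⟨c • 1, by simp only [Algebra.algebraMap_eq_smul_one, TensorProduct.smul_tmul]⟩
  | zero => exact ⟨0, by simp⟩
  | add x y _ _ hx hy =>
    obtain ⟨f, rfl⟩ := hx
    obtain ⟨g, rfl⟩ := hy
    exact ⟨f + g, by rw [TensorProduct.add_tmul]⟩
  | smul f x _ hx =>
    obtain ⟨g, rfl⟩ := hx
    exact ⟨f • g, by rw [TensorProduct.smul_tmul']⟩

lemma baseChange_mem_rightDegreeLE {D : S →ₗ[R] S}
    (hD : ∀ f ∈ degreeLE V (k + 1), D f ∈ degreeLE V k) {x : S ⊗[R] S}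
    (hx : x ∈ rightDegreeLE R V (k + 1)) : D.baseChange S x ∈ rightDegreeLE R V k := by
  suffices rightDegreeLE R V (k + 1) ≤ (rightDegreeLE R V k).comap (D.baseChange S) from this hx
  refine Submodule.span_le.2 ?_
  rintro _ ⟨g, hg, rfl⟩
  exact Submodule.subset_span ⟨D g, hD g hg, rfl⟩

variable [IsDomain S] [Algebra K R] [IsScalarTower K R S] [Group W] [MulSemiringAction W S]
  [SMulCommClass W K S] [SMulCommClass W R S]

lemma IsReflectionAlong.rightRep_apply_eq_self {s : W} {a : S}
    (hs : IsReflectionAlong V a (MulSemiringAction.toAlgHom K S s))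
    (hV : Algebra.adjoin K (V : Set S) = ⊤)
    (hk : Disjoint (twistedKer R S W) (rightDegreeLE R V k)) {x : S ⊗[R] S}
    (hx : x ∈ twistedKer R S W) (hxk : x ∈ rightDegreeLE R V (k + 1)) :
    rightRep R S W s x = x := by
  have hdvd (f : S) : a ∣ s • f - f := hs.dvd_sub hV f
  rcases eq_or_ne a 0 with rfl | ha
  · have hD (f : S) : s • f = f + 0 * (0 : S →ₗ[R] S) f := by
      simpa [sub_eq_zero] using hdvd f
    exact rightRep_apply_eq_self_of_baseChange_eq_zero hD (by simp)
  · obtain ⟨D, hD⟩ := exists_mul_apply_eq_of_forall_dvd ha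
      (ψ := DistribSMul.toLinearMap R S s - LinearMap.id) hdvd
    replace hD (f : S) : s • f = f + a * D f := by
      rw [← hD]; simp
    have hdeg (f : S) (hf : f ∈ degreeLE V (k + 1)) : D f ∈ degreeLE V k :=
      hs.dividedDifference_mem_degreeLE ha (D := D.restrictScalars K) hD hf
    refine rightRep_apply_eq_self_of_baseChange_eq_zero hD (Submodule.disjoint_def.1 hk _ ?_ ?_)
    · exact baseChange_mem_twistedKer ha hD hx
    · exact baseChange_mem_rightDegreeLE hdeg hxk

lemma disjoint_twistedKer_rightDegreeLE [Finite W] [Algebra.IsInvariant R S W]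
    (hcard : IsUnit (Nat.card W : R)) (hV : Algebra.adjoin K (V : Set S) = ⊤) {G : Set W}
    (hG : Subgroup.closure G = ⊤)
    (hrefl : ∀ s ∈ G, ∃ a, IsReflectionAlong V a (MulSemiringAction.toAlgHom K S s)) (k : ℕ) :
    Disjoint (twistedKer R S W) (rightDegreeLE R V k) := by
  refine Submodule.disjoint_def.2 ?_
  induction k with
  | zero =>
    intro x hx hxk
    obtain ⟨f, rfl⟩ := exists_eq_tmul_one_of_mem_rightDegreeLE_zero hxk
    rw [eq_zero_of_tmul_one_mem_twistedKer hx, TensorProduct.zero_tmul]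
  | succ k ih =>
    intro x hx hxk
    refine eq_zero_of_mem_twistedKer_of_mem_invariants hcard hx ?_
    refine rightRep_apply_eq_self_of_closure_eq_top hG fun s hs ↦ ?_
    obtain ⟨a, ha⟩ := hrefl s hs
    exact ha.rightRep_apply_eq_self hV (Submodule.disjoint_def.2 ih) hx hxk

end Filtration

section PolyAct

variable {n : ℕ}

/-- The linear form in `ℚ[X_0, …, X_{n-1}]` with the given coefficients, i.e. the inclusion of
`V = ℚⁿ` into `Sym(V)`. -/
noncomputable def linearForm : (Fin n → ℚ) →ₗ[ℚ] MvPolynomial (Fin n) ℚ :=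
  Fintype.linearCombination ℚ X

lemma adjoin_range_linearForm :
    Algebra.adjoin ℚ ((linearForm (n := n)).range : Set (MvPolynomial (Fin n) ℚ)) = ⊤ := by
  rw [linearForm, Fintype.range_linearCombination, Algebra.adjoin_span, adjoin_range_X]

lemma linearForm_single (i : Fin n) : linearForm (Pi.single i 1) = X i := by
  rw [linearForm, Fintype.linearCombination_apply_single, one_smul]

lemma polyActE_X (g : (Fin n → ℚ) ≃ₗ[ℚ] (Fin n → ℚ)) (i : Fin n) :
    polyActE g (X i) = linearForm (g (Pi.single i 1)) := by
  simp [polyActE, linearForm, Fintype.linearCombination_apply, smul_eq_C_mul]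

lemma polyActE_linearForm (g : (Fin n → ℚ) ≃ₗ[ℚ] (Fin n → ℚ)) (v : Fin n → ℚ) :
    polyActE g (linearForm v) = linearForm (g v) := by
  suffices (polyActE g).toLinearMap ∘ₗ linearForm = linearForm ∘ₗ g.toLinearMap from
    LinearMap.congr_fun this v
  ext1 i
  ext1
  simp [linearForm_single, polyActE_X]

lemma polyActE_one : polyActE (1 : (Fin n → ℚ) ≃ₗ[ℚ] (Fin n → ℚ)) = AlgHom.id ℚ _ :=
  algHom_ext fun i ↦ (polyActE_X 1 i).trans (linearForm_single i)

lemma polyActE_mul (g h : (Fin n → ℚ) ≃ₗ[ℚ] (Fin n → ℚ)) :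
    polyActE (g * h) = (polyActE g).comp (polyActE h) := by
  ext1 i
  simp [polyActE_X, polyActE_linearForm]

/-- The action `polyActE` of `GL(V)` on `Sym(V)`, bundled as a group homomorphism. -/
noncomputable def polyAut :
    ((Fin n → ℚ) ≃ₗ[ℚ] (Fin n → ℚ)) →* MvPolynomial (Fin n) ℚ ≃ₐ[ℚ] MvPolynomial (Fin n) ℚ where
  toFun g := .ofAlgHom (polyActE g) (polyActE g⁻¹)
    (by rw [← polyActE_mul, mul_inv_cancel, polyActE_one])
    (by rw [← polyActE_mul, inv_mul_cancel, polyActE_one])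
  map_one' := AlgEquiv.ext fun f ↦ DFunLike.congr_fun polyActE_one f
  map_mul' g h := AlgEquiv.ext fun f ↦ DFunLike.congr_fun (polyActE_mul g h) f

lemma IsReflection.mem_dilatransvections {g : (Fin n → ℚ) ≃ₗ[ℚ] (Fin n → ℚ)}
    (hg : IsReflection g) : g ∈ LinearEquiv.dilatransvections ℚ (Fin n → ℚ) := by
  obtain ⟨-, H, hH, hfix⟩ := hg
  have hrank : Module.finrank ℚ ((Fin n → ℚ) ⧸ H) = 1 :=
    isSimpleModule_iff_finrank_eq_one.1 (isSimpleModule_iff_isCoatom.2 hH)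
  rw [LinearEquiv.mem_dilatransvections_iff_finrank_quotient, ← hrank]
  have hle : H ≤ (g : (Fin n → ℚ) →ₗ[ℚ] (Fin n → ℚ)).fixedSubmodule := fun x hx ↦
    LinearMap.mem_fixedSubmodule_iff.2 (hfix x hx)
  exact LinearMap.finrank_le_finrank_of_surjective (Submodule.factor_surjective hle)

lemma IsReflection.exists_isReflectionAlong {g : (Fin n → ℚ) ≃ₗ[ℚ] (Fin n → ℚ)}
    (hg : IsReflection g) : ∃ a, IsReflectionAlong (LinearMap.range linearForm) a (polyActE g) := by
  obtain ⟨f, v, hfv⟩ := hg.mem_dilatransvections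
  have hgx (x : Fin n → ℚ) : g x = x + f x • v := LinearMap.congr_fun hfv x
  refine ⟨linearForm v, ⟨v, rfl⟩, ?_⟩
  rintro _ ⟨x, rfl⟩
  exact ⟨f x, by rw [polyActE_linearForm, hgx, map_add, map_smul]⟩

end PolyAct

theorem stmt_4_general {K S W : Type*} [CommRing K] [CommRing S] [IsDomain S] [Algebra K S]
    [Group W] [Finite W] (hcard : IsUnit (Nat.card W : K)) (ρ : W →* S ≃ₐ[K] S)
    {V : Submodule K S} (hV : Algebra.adjoin K (V : Set S) = ⊤)
    (hrefl : ∃ G : Set W, (∀ s ∈ G, ∃ a, IsReflectionAlong V a (ρ s : S →ₐ[K] S)) ∧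
      Subgroup.closure G = ⊤)
    (R : Subalgebra K S) (hR : ∀ f, f ∈ R ↔ ∀ w, ρ w f = f)
    (i : W → S ⊗[R] S →ₗ[R] S) (hi : ∀ w f g, i w (f ⊗ₜ g) = f * ρ w g) :
    Function.Injective fun (x : S ⊗[R] S) (w : W) ↦ i w x := by
  obtain ⟨G, hrefl, hG⟩ := hrefl
  let _ : MulSemiringAction W S := .compHom S ρ
  have : SMulCommClass W K S := ⟨fun w c f ↦ map_smul (ρ w) c f⟩
  have : SMulCommClass W R S := ⟨fun w r f ↦ by
    change ρ w (r * f) = r * ρ w f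
    rw [map_mul, (hR r).1 r.2 w]⟩
  have : Algebra.IsInvariant R S W := ⟨fun f hf ↦ ⟨⟨f, (hR f).2 hf⟩, rfl⟩⟩
  have hiw (w : W) : i w = (twistedMul R w).restrictScalars R :=
    TensorProduct.ext' (hi w)
  have hcardR : IsUnit (Nat.card W : R) := by simpa using hcard.map (algebraMap K R)
  intro x y hxy
  rw [← sub_eq_zero]
  obtain ⟨k, hk⟩ := exists_mem_rightDegreeLE hV (x - y)
  have hker : x - y ∈ twistedKer R S W := mem_twistedKer.2 fun w ↦ by
    have h : i w (x - y) = 0 := by rw [map_sub, sub_eq_zero]; exact congrFun hxy w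
    rwa [hiw] at h
  exact Submodule.disjoint_def.1
    (disjoint_twistedKer_rightDegreeLE hcardR hV hG hrefl k) _ hker hk

/-- Let `V` be a finite-dimensional `ℚ`-vector space (modelled as
`V = ℚⁿ`), `W ⊆ GL(V)` a finite subgroup generated by reflections, `S = Sym(V)` and
`S^W` the invariant subring.  For `w ∈ W` let `i_w : S ⊗_{S^W} S → S` be the map
determined by `f ⊗ g ↦ f · w(g)`.  Then the combined map
`∏_{w ∈ W} i_w : S ⊗_{S^W} S → ∏_{w ∈ W} S` is injective. -/
theorem stmt_4 (n : ℕ)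
    (W : Subgroup ((Fin n → ℚ) ≃ₗ[ℚ] (Fin n → ℚ)))
    (hWfin : (W : Set ((Fin n → ℚ) ≃ₗ[ℚ] (Fin n → ℚ))).Finite)
    (hWrefl : ∃ G : Set ((Fin n → ℚ) ≃ₗ[ℚ] (Fin n → ℚ)),
        (∀ g ∈ G, IsReflection g) ∧ Subgroup.closure G = W)
    (SW : Subalgebra ℚ (MvPolynomial (Fin n) ℚ))
    (hSW : ∀ f, f ∈ SW ↔ ∀ g ∈ W, polyActE g f = f)
    (i : ∀ _ : W, (MvPolynomial (Fin n) ℚ ⊗[↥SW] MvPolynomial (Fin n) ℚ) →ₗ[↥SW]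
        MvPolynomial (Fin n) ℚ)
    (hi : ∀ (w : W) (f g : MvPolynomial (Fin n) ℚ),
        i w (f ⊗ₜ[↥SW] g) = f * polyActE (w : (Fin n → ℚ) ≃ₗ[ℚ] (Fin n → ℚ)) g) :
    Function.Injective fun (x : MvPolynomial (Fin n) ℚ ⊗[↥SW] MvPolynomial (Fin n) ℚ)
      (w : W) => i w x := by
  obtain ⟨G, hG, rfl⟩ := hWrefl
  have : Finite (Subgroup.closure G) := hWfin
  have hcard : IsUnit (Nat.card (Subgroup.closure G) : ℚ) :=
    isUnit_iff_ne_zero.2 (Nat.cast_ne_zero.2 Nat.card_pos.ne')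
  exact stmt_4_general hcard (polyAut.comp (Subgroup.closure G).subtype) adjoin_range_linearForm
    ⟨Subtype.val ⁻¹' G, fun s hs ↦ (hG s hs).exists_isReflectionAlong,
      Subgroup.closure_closure_coe_preimage⟩
    SW (fun f ↦ (hSW f).trans ⟨fun h w ↦ h w w.2, fun h g hg ↦ h ⟨g, hg⟩⟩) i hi
end

section
/- Let n ≥ 1. In ℚ[x_1,…,x_n,y_1,…,y_n] set Φ_n := ∏_{1≤i<j≤n}(x_i − y_j); set c_i := σ_i(x_1,…,x_n) + σ_i(y_1,…,y_n) for 0 ≤ i ≤ n (where σ_i is the i-th elementary symmetric polynomial, σ_0 = 1, so c_0 = 2) and c_i := 0 for i < 0 or i > n; and set Γ_n := det((c_{n+1+j−2i})_{1≤i,j≤n}). The hyperoctahedral group W_n of signed permutations of {1,…,n} acts on ℚ[x_1,…,x_n] by w(x_j) = ε_j x_{k_j} where w sends j to ±k_j; for w ∈ W_n let e_w be the substitution fixing each x_i and sending y_j to w(x_j). Then e_{id}(Φ_n·Γ_n) = ∏_{1≤i<j≤n}(x_i − x_j)(x_i + x_j) · ∏_{i=1}^n 2x_i, the product of the positive roots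 of Sp_{2n}, while e_w(Φ_n·Γ_n) = 0 for every w ≠ id. -/
open MvPolynomial Finset

/-- `Φ_n := ∏_{1≤i<j≤n} (x_i − y_j)` in `ℚ[x_1,…,x_n,y_1,…,y_n]`, where the `x`-variables
are indexed by `Sum.inl` and the `y`-variables by `Sum.inr`. -/
noncomputable def PhiC (n : ℕ) : MvPolynomial (Fin n ⊕ Fin n) ℚ :=
  ∏ i : Fin n, ∏ j ∈ Finset.Ioi i, (X (Sum.inl i) - X (Sum.inr j))

/-- `c_k := σ_k(x_1,…,x_n) + σ_k(y_1,…,y_n)` for `0 ≤ k ≤ n` (so `c_0 = 2`), and `c_k := 0`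
otherwise (type `Cₙ` normalization). -/
noncomputable def cC (n : ℕ) (k : ℤ) : MvPolynomial (Fin n ⊕ Fin n) ℚ :=
  if 0 ≤ k ∧ k ≤ (n : ℤ) then
    rename Sum.inl (esymm (Fin n) ℚ k.toNat) + rename Sum.inr (esymm (Fin n) ℚ k.toNat)
  else 0

/-- `Γ_n := det((c_{n+1+j−2i})_{1≤i,j≤n})`; with `0`-indexed `i, j` the entry is
`c_{n+j−2i}`. -/
noncomputable def GammaC (n : ℕ) : MvPolynomial (Fin n ⊕ Fin n) ℚ :=
  (Matrix.of fun i j : Fin n => cC n ((n : ℤ) + (j : ℤ) - 2 * (i : ℤ))).det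

/-!
Let `F_z(t) = ∏ (t + z_i)`, so that the coefficients of `p = F_x + F_y` are the `c_k`. Then `Γ_n` is
the determinant of the map `U ↦ even part of U * p` on polynomials of degree less than `n`.

If `y = x`, every `-x_k` is a root of `p`, so the even part of `U * p` takes the value
`U(x_k) p(x_k) / 2 = U(x_k) F_x(x_k)` at `x_k`: the matrix intertwines the Vandermonde matrices of
`x` and `x²` up to the diagonal factors `F_x(x_k) = ∏ i, (x_k + x_i)`, which gives its determinant.

If `y` arises from a permutation `z` of `x` by changing the signs on a nonempty set `A`, then `p` is
`∏ (t + z_i)` over `i ∉ A` times a polynomial which is even or odd according to the parity of `#A`.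
Hence `U = t ^ (#A - 1) * ∏ (t - z_i)`, with `i ∉ A`, makes `U * p` odd, so `U` is in the kernel.
When no sign changes, a nontrivial permutation has a `j` with `π j < j`, which kills a factor of
`Φ_n`.
-/

section EvenPart

open scoped Polynomial

section CommSemiring

variable {R : Type*} [CommSemiring R]

lemma degree_contract_two_lt {p : R[X]} {n : ℕ} (hp : p.natDegree < 2 * n) :
    (p.contract 2).degree < n := by
  rw [Polynomial.degree_lt_iff_coeff_zero]
  intro m hm
  rw [Polynomial.coeff_contract two_ne_zero]
  exact Polynomial.coeff_eq_zero_of_natDegree_lt (by omega)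

/-- The matrix, in the bases of monomials, of the map sending a polynomial `U` of degree less than
`n` to the even part of `U * p`, read as a polynomial in `X ^ 2` and truncated in degree `n`. -/
noncomputable def evenPartMatrix (n : ℕ) (p : R[X]) : Matrix (Fin n) (Fin n) R :=
  Matrix.of fun i j => ((Polynomial.X ^ (j : ℕ) * p).contract 2).coeff i

lemma evenPartMatrix_mulVec_coeff {n : ℕ} (p : R[X]) {U : R[X]} (hU : U.natDegree < n) :
    (evenPartMatrix n p).mulVec (fun j => U.coeff j) =
      fun i : Fin n => ((U * p).contract 2).coeff i := by
  funext i
  calc (evenPartMatrix n p).mulVec (fun j => U.coeff j) i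
      = ∑ j : Fin n, ((Polynomial.X ^ (j : ℕ) * p).contract 2).coeff i * U.coeff j := rfl
    _ = ∑ j ∈ range n, ((Polynomial.X ^ j * p).contract 2).coeff i * U.coeff j :=
        Fin.sum_univ_eq_sum_range
          (fun j => ((Polynomial.X ^ j * p).contract 2).coeff i * U.coeff j) n
    _ = ((U * p).contract 2).coeff i := by
        conv_rhs => rw [U.as_sum_range_C_mul_X_pow' hU, sum_mul]
        simp only [Polynomial.coeff_contract two_ne_zero, Polynomial.finsetSum_coeff, mul_assoc,
          Polynomial.coeff_C_mul, mul_comm (U.coeff _)]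

end CommSemiring

variable {R : Type*} [CommRing R]

lemma add_comp_neg_X_eq_two_nsmul_expand_contract (p : R[X]) :
    p + p.comp (-Polynomial.X) = 2 • Polynomial.expand R 2 (p.contract 2) := by
  ext k
  rw [show (-Polynomial.X : R[X]) = Polynomial.C (-1) * Polynomial.X by simp,
    Polynomial.coeff_add, Polynomial.comp_C_mul_X_coeff, Polynomial.coeff_smul,
    Polynomial.coeff_expand two_pos]
  split_ifs with hk
  · rw [Polynomial.coeff_contract two_ne_zero, Nat.div_mul_cancel hk,
      (even_iff_two_dvd.mpr hk).neg_one_pow, mul_one, two_nsmul]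
  · rw [(Nat.not_even_iff_odd.mp (mt even_iff_two_dvd.mp hk)).neg_one_pow]
    simp

lemma eval_add_eval_neg_eq_two_mul_eval_contract (p : R[X]) (a : R) :
    p.eval a + p.eval (-a) = 2 * (p.contract 2).eval (a ^ 2) := by
  simpa [Polynomial.eval_comp, Polynomial.expand_eval] using
    congrArg (Polynomial.eval a) (add_comp_neg_X_eq_two_nsmul_expand_contract p)

lemma contract_two_eq_zero_of_comp_neg_X_eq_neg [IsAddTorsionFree R] {p : R[X]}
    (hp : p.comp (-Polynomial.X) = -p) : p.contract 2 = 0 := by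
  have h := add_comp_neg_X_eq_two_nsmul_expand_contract p
  rw [hp, add_neg_cancel] at h
  ext i
  have hi := congrArg (Polynomial.coeff · (i * 2)) h
  rw [Polynomial.coeff_smul, Polynomial.coeff_expand_mul two_pos, eq_comm, Polynomial.coeff_zero,
    nsmul_eq_zero_iff_right two_ne_zero] at hi
  exact hi

lemma det_evenPartMatrix_eq_zero {n : ℕ} {p U : R[X]} (hU : U.Monic) (hdeg : U.natDegree < n)
    (hodd : (U * p).contract 2 = 0) : (evenPartMatrix n p).det = 0 := by
  refine Matrix.det_eq_zero_of_mulVec_eq_zero_of_mem_nonZeroDivisors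
    (v := fun j => U.coeff j) (i := ⟨U.natDegree, hdeg⟩) ?_ ?_
  · rw [evenPartMatrix_mulVec_coeff p hdeg, hodd]
    rfl
  · simpa only [Polynomial.coeff_natDegree, hU.leadingCoeff] using one_mem _

lemma two_smul_vandermonde_sq_mul_evenPartMatrix {n : ℕ} {p : R[X]} (hp : p.natDegree ≤ n)
    {x : Fin n → R} (hroot : ∀ k, p.eval (-x k) = 0) :
    (2 : R) • (Matrix.vandermonde (fun k => x k ^ 2) * evenPartMatrix n p) =
      Matrix.diagonal (fun k => p.eval (x k)) * Matrix.vandermonde x := by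
  ext k j
  set q := Polynomial.X ^ (j : ℕ) * p
  have hq : q.natDegree < 2 * n := by
    have hle : q.natDegree ≤ j + n :=
      Polynomial.natDegree_mul_le_of_le (Polynomial.natDegree_X_pow_le j) hp
    omega
  calc (2 : R) * (Matrix.vandermonde (fun k => x k ^ 2) * evenPartMatrix n p) k j
      = 2 * (q.contract 2).eval (x k ^ 2) := by
        rw [Polynomial.eval_eq_sum, ← Polynomial.sum_fin _ (by simp) (degree_contract_two_lt hq)]
        simp only [Matrix.mul_apply, Matrix.vandermonde_apply, evenPartMatrix, Matrix.of_apply,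
          q, mul_comm]
    _ = q.eval (x k) + q.eval (-x k) := (eval_add_eval_neg_eq_two_mul_eval_contract q _).symm
    _ = p.eval (x k) * x k ^ (j : ℕ) := by simp [q, hroot, mul_comm]
    _ = (Matrix.diagonal (fun k => p.eval (x k)) * Matrix.vandermonde x) k j := by
        rw [Matrix.diagonal_mul, Matrix.vandermonde_apply]

end EvenPart

lemma exists_apply_lt_of_ne_one {α : Type*} [LinearOrder α] [WellFoundedGT α] {π : Equiv.Perm α}
    (hπ : π ≠ 1) : ∃ a, π a < a := by
  contrapose! hπ
  ext a
  induction a using WellFoundedGT.induction with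
  | ind a ih => exact (hπ a).eq_or_lt.elim Eq.symm fun ha => π.injective (ih _ ha)

lemma prod_prod_add_eq_prod_two_mul_mul_sq {ι R : Type*} [CommSemiring R] [Fintype ι]
    [LinearOrder ι] [LocallyFiniteOrderTop ι] [LocallyFiniteOrderBot ι] (x : ι → R) :
    ∏ k, ∏ i, (x k + x i) = (∏ i, (2 * x i)) * (∏ i, ∏ j ∈ Ioi i, (x i + x j)) ^ 2 := by
  have hoff : ∏ k, ∏ i ∈ {k}ᶜ, (x k + x i) = (∏ i, ∏ j ∈ Ioi i, (x i + x j)) ^ 2 := by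
    rw [prod_comm' (s' := fun i => {i}ᶜ) (t' := univ) (by simp [eq_comm]),
      ← prod_prod_Ioi_mul_eq_prod_prod_off_diag]
    simp only [add_comm, ← sq, prod_pow]
  rw [← hoff, ← prod_mul_distrib]
  exact prod_congr rfl fun k _ => by rw [Fintype.prod_eq_mul_prod_compl k, two_mul]

section ProdXAddC

open scoped Polynomial

section CommSemiring

variable {ι R : Type*} [CommSemiring R]

/-- The monic polynomial `∏ (X + z i)` over `i ∈ s`, whose coefficients are the elementary symmetric
polynomials of the `z i`. -/
noncomputable def prodXAddC (s : Finset ι) (z : ι → R) : R[X] :=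
  ∏ i ∈ s, (Polynomial.X + Polynomial.C (z i))

lemma monic_prodXAddC (s : Finset ι) (z : ι → R) : (prodXAddC s z).Monic :=
  Polynomial.monic_prod_of_monic _ _ fun _ _ => Polynomial.monic_X_add_C _

lemma natDegree_prodXAddC_le (s : Finset ι) (z : ι → R) : (prodXAddC s z).natDegree ≤ #s := by
  refine (Polynomial.natDegree_prod_le _ _).trans
    ((sum_le_card_nsmul _ _ 1 fun i _ => ?_).trans_eq (by simp))
  exact Polynomial.natDegree_add_C.trans_le Polynomial.natDegree_X_le

lemma eval_prodXAddC (s : Finset ι) (z : ι → R) (a : R) :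
    (prodXAddC s z).eval a = ∏ i ∈ s, (a + z i) := by
  simp [prodXAddC, Polynomial.eval_prod]

lemma coeff_prodXAddC_univ (S : Type*) [CommSemiring S] [Algebra S R] [Fintype ι]
    (z : ι → R) {k : ℕ} (hk : k ≤ Fintype.card ι) :
    (prodXAddC univ z).coeff k = aeval z (esymm ι S (Fintype.card ι - k)) := by
  rw [prodXAddC, Finset.prod_X_add_C_coeff _ _ (by simpa using hk)]
  simp [esymm]

lemma prodXAddC_univ_comp_perm [Fintype ι] (z : ι → R) (π : Equiv.Perm ι) :
    prodXAddC univ (z ∘ π) = prodXAddC univ z :=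
  Equiv.prod_comp π fun i => Polynomial.X + Polynomial.C (z i)

end CommSemiring

variable {ι R : Type*} [CommRing R]

lemma prodXAddC_comp_neg_X (s : Finset ι) (z : ι → R) :
    (prodXAddC s z).comp (-Polynomial.X) = (-1) ^ #s * prodXAddC s (-z) := by
  rw [prodXAddC, prodXAddC, Polynomial.prod_comp, ← prod_const, ← prod_mul_distrib]
  refine prod_congr rfl fun i _ => ?_
  simp [add_comm]

lemma prodXAddC_add_prodXAddC_neg_comp_neg_X (s : Finset ι) (z : ι → R) :
    (prodXAddC s z + prodXAddC s (-z)).comp (-Polynomial.X) =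
      (-1) ^ #s * (prodXAddC s z + prodXAddC s (-z)) := by
  rw [Polynomial.add_comp, prodXAddC_comp_neg_X, prodXAddC_comp_neg_X, neg_neg, ← mul_add, add_comm]

lemma prodXAddC_mul_prodXAddC_neg_comp_neg_X (s : Finset ι) (z : ι → R) :
    (prodXAddC s z * prodXAddC s (-z)).comp (-Polynomial.X) =
      prodXAddC s z * prodXAddC s (-z) := by
  rw [Polynomial.mul_comp, prodXAddC_comp_neg_X, prodXAddC_comp_neg_X, neg_neg, mul_mul_mul_comm,
    ← mul_pow, neg_one_mul, neg_neg, one_pow, one_mul, mul_comm]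

lemma prodXAddC_add_prodXAddC_piecewise_neg [Fintype ι] [DecidableEq ι] (A : Finset ι)
    (z : ι → R) :
    prodXAddC univ z + prodXAddC univ (A.piecewise (-z) z) =
      (prodXAddC A z + prodXAddC A (-z)) * prodXAddC Aᶜ z := by
  have hA : prodXAddC A (A.piecewise (-z) z) = prodXAddC A (-z) :=
    prod_congr rfl fun i hi => by rw [piecewise_eq_of_mem _ _ _ hi]
  have hAc : prodXAddC Aᶜ (A.piecewise (-z) z) = prodXAddC Aᶜ z :=
    prod_congr rfl fun i hi => by rw [piecewise_eq_of_notMem _ _ _ (mem_compl.mp hi)]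
  have hsplit (y : ι → R) : prodXAddC univ y = prodXAddC A y * prodXAddC Aᶜ y :=
    (prod_mul_prod_compl A _).symm
  rw [hsplit, hsplit (A.piecewise (-z) z), hA, hAc, add_mul]

lemma det_evenPartMatrix_prodXAddC_piecewise_neg [IsAddTorsionFree R] {n : ℕ}
    {A : Finset (Fin n)} (hA : A.Nonempty) (z : Fin n → R) :
    (evenPartMatrix n (prodXAddC univ z + prodXAddC univ (A.piecewise (-z) z))).det = 0 := by
  obtain ⟨m, hm⟩ : ∃ m, #A = m + 1 := Nat.exists_eq_add_one.mpr hA.card_pos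
  have hdeg : (Polynomial.X ^ m * prodXAddC Aᶜ (-z)).natDegree < n := by
    have hle := Polynomial.natDegree_mul_le_of_le (Polynomial.natDegree_X_pow_le m)
      (natDegree_prodXAddC_le Aᶜ (-z))
    have hcard := card_add_card_compl A
    rw [Fintype.card_fin] at hcard
    omega
  refine det_evenPartMatrix_eq_zero ((Polynomial.monic_X_pow m).mul (monic_prodXAddC _ _)) hdeg
    (contract_two_eq_zero_of_comp_neg_X_eq_neg ?_)
  rw [prodXAddC_add_prodXAddC_piecewise_neg]
  set E := prodXAddC A z + prodXAddC A (-z) with hE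
  set P := prodXAddC Aᶜ z
  set Q := prodXAddC Aᶜ (-z)
  have hEodd : (Polynomial.X ^ m * E).comp (-Polynomial.X) = -(Polynomial.X ^ m * E) := by
    rw [Polynomial.mul_comp, prodXAddC_add_prodXAddC_neg_comp_neg_X, Polynomial.X_pow_comp, ← hE,
      neg_pow, hm, pow_succ]
    rcases neg_one_pow_eq_or R[X] m with h | h <;> rw [h] <;> ring
  calc (Polynomial.X ^ m * Q * (E * P)).comp (-Polynomial.X)
      = (Polynomial.X ^ m * E * (P * Q)).comp (-Polynomial.X) := by congr 1; ring
    _ = -(Polynomial.X ^ m * E) * (P * Q) := by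
        rw [Polynomial.mul_comp, hEodd, prodXAddC_mul_prodXAddC_neg_comp_neg_X]
    _ = -(Polynomial.X ^ m * Q * (E * P)) := by ring

lemma det_evenPartMatrix_prodXAddC_add_self [IsDomain R] {n : ℕ} (h2 : (2 : R) ≠ 0) {x : Fin n → R}
    (hx : Function.Injective fun k => x k ^ 2) :
    (evenPartMatrix n (prodXAddC univ x + prodXAddC univ x)).det =
      (∏ i, (2 * x i)) * ∏ i, ∏ j ∈ Ioi i, (x i + x j) := by
  set F := prodXAddC univ x
  have hdeg : (F + F).natDegree ≤ n := by
    have hF : F.natDegree ≤ n := by simpa using natDegree_prodXAddC_le univ x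
    exact Polynomial.natDegree_add_le_of_degree_le hF hF
  have hroot (k : Fin n) : (F + F).eval (-x k) = 0 := by
    rw [Polynomial.eval_add, eval_prodXAddC, prod_eq_zero (mem_univ k) (neg_add_cancel _), add_zero]
  have hval (k : Fin n) : (F + F).eval (x k) = 2 * ∏ i, (x k + x i) := by
    rw [Polynomial.eval_add, eval_prodXAddC, two_mul]
  have hV : (Matrix.vandermonde fun k => x k ^ 2).det =
      (Matrix.vandermonde x).det * ∏ i, ∏ j ∈ Ioi i, (x i + x j) := by
    simp only [Matrix.det_vandermonde, ← prod_mul_distrib]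
    exact prod_congr rfl fun i _ => prod_congr rfl fun j _ => by ring
  have hdet := congrArg Matrix.det (two_smul_vandermonde_sq_mul_evenPartMatrix hdeg hroot)
  simp only [Matrix.det_smul, Matrix.det_mul, Matrix.det_diagonal, hval, prod_mul_distrib,
    prod_const, card_univ, prod_prod_add_eq_prod_two_mul_mul_sq, mul_assoc] at hdet
  replace hdet := mul_left_cancel₀ (pow_ne_zero _ h2) hdet
  refine mul_left_cancel₀ (Matrix.det_vandermonde_ne_zero_iff.mpr hx) (hdet.trans ?_)
  rw [hV, prod_mul_distrib, prod_const, card_univ]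
  ring

end ProdXAddC

section Specialization

variable {R : Type*} [CommRing R] [Algebra ℚ R] {n : ℕ}

lemma aeval_PhiC (x y : Fin n → R) :
    aeval (Sum.elim x y) (PhiC n) = ∏ i, ∏ j ∈ Ioi i, (x i - y j) := by
  simp [PhiC, map_prod]

lemma aeval_cC_sub (x y : Fin n → R) (m : ℕ) :
    aeval (Sum.elim x y) (cC n (n - m)) = (prodXAddC univ x + prodXAddC univ y).coeff m := by
  rw [Polynomial.coeff_add, cC]
  rcases le_or_gt m n with hm | hm
  · have hk : ((n : ℤ) - m).toNat = n - m := by omega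
    rw [if_pos (by omega), map_add, aeval_rename, aeval_rename, hk,
      coeff_prodXAddC_univ ℚ x (by simpa using hm), coeff_prodXAddC_univ ℚ y (by simpa using hm)]
    simp [Function.comp_def]
  · have hcoeff (z : Fin n → R) : (prodXAddC univ z).coeff m = 0 :=
      Polynomial.coeff_eq_zero_of_natDegree_lt
        ((natDegree_prodXAddC_le univ z).trans_lt (by simpa using hm))
    rw [if_neg (by omega), map_zero, hcoeff, hcoeff, add_zero]

lemma cC_of_lt {k : ℤ} (hk : n < k) : cC n k = 0 :=
  if_neg (by omega)

lemma aeval_GammaC (x y : Fin n → R) :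
    aeval (Sum.elim x y) (GammaC n) =
      (evenPartMatrix n (prodXAddC univ x + prodXAddC univ y)).det := by
  rw [GammaC, AlgHom.map_det]
  congr 1
  ext i j
  simp only [AlgHom.mapMatrix_apply, Matrix.map_apply, Matrix.of_apply, evenPartMatrix,
    Polynomial.coeff_contract two_ne_zero, Polynomial.coeff_X_pow_mul']
  split_ifs with hij
  · rw [← aeval_cC_sub]
    congr 2
    omega
  · rw [cC_of_lt (by omega), map_zero]

lemma aeval_PhiC_comp_perm_eq_zero (x : Fin n → R) {π : Equiv.Perm (Fin n)} (hπ : π ≠ 1) :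
    aeval (Sum.elim x (x ∘ π)) (PhiC n) = 0 := by
  obtain ⟨j, hj⟩ := exists_apply_lt_of_ne_one hπ
  rw [aeval_PhiC]
  exact prod_eq_zero (mem_univ (π j)) (prod_eq_zero (mem_Ioi.mpr hj) (sub_self _))

lemma aeval_GammaC_piecewise_neg_comp_perm_eq_zero (x : Fin n → R) (π : Equiv.Perm (Fin n))
    {A : Finset (Fin n)} (hA : A.Nonempty) :
    aeval (Sum.elim x (A.piecewise (-(x ∘ π)) (x ∘ π))) (GammaC n) = 0 := by
  have : IsAddTorsionFree R := .of_module_rat R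
  rw [aeval_GammaC, ← prodXAddC_univ_comp_perm x π, det_evenPartMatrix_prodXAddC_piecewise_neg hA]

end Specialization

lemma injective_X_sq {σ R : Type*} [CommRing R] [IsDomain R] (h2 : (2 : R) ≠ 0) :
    Function.Injective fun i : σ => (X i : MvPolynomial σ R) ^ 2 := by
  intro i j hij
  refine (sq_eq_sq_iff_eq_or_eq_neg.mp hij).elim (fun h => X_injective h) fun h => ?_
  have hone : (1 : R) = -1 := by simpa using congrArg (eval fun _ => (1 : R)) h
  exact absurd (by linear_combination hone) h2

/-- type `Cₙ`.  For a signed permutation `w = (π, ε)` of `{1,…,n}`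
(`ε j ∈ {1,−1}`) let `e_w` be the substitution fixing the `x_i` and sending
`y_j ↦ ε_j·x_{π(j)}`.  Then `e_id(Φ_n·Γ_n) = ∏_{i<j}(x_i−x_j)(x_i+x_j)·∏_i 2x_i`, the
product of the positive roots of `Sp_{2n}`, while `e_w(Φ_n·Γ_n) = 0` for every `w ≠ id`. -/
theorem stmt_6 (n : ℕ) (hn : 1 ≤ n) :
    (aeval (Sum.elim (fun i => X i) fun j => (X j : MvPolynomial (Fin n) ℚ)))
        (PhiC n * GammaC n)
      = (∏ i : Fin n, ∏ j ∈ Finset.Ioi i, ((X i - X j) * (X i + X j))) *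
          ∏ i : Fin n, (2 * X i)
    ∧ ∀ (π : Equiv.Perm (Fin n)) (ε : Fin n → ℚ), (∀ j, ε j = 1 ∨ ε j = -1) →
        ¬(π = 1 ∧ ε = fun _ => 1) →
        (aeval (Sum.elim (fun i => X i) fun j => C (ε j) * X (π j)))
            (PhiC n * GammaC n) = 0 := by
  refine ⟨?_, fun π ε hε hne => ?_⟩
  · rw [map_mul, aeval_PhiC, aeval_GammaC,
      det_evenPartMatrix_prodXAddC_add_self two_ne_zero (injective_X_sq two_ne_zero)]
    simp only [prod_mul_distrib]
    ring
  · rw [map_mul]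
    by_cases hpos : ∀ j, ε j = 1
    · simp only [hpos, C_1, one_mul]
      exact mul_eq_zero_of_left (aeval_PhiC_comp_perm_eq_zero X fun h => hne ⟨h, funext hpos⟩) _
    · obtain ⟨j, hj⟩ := not_forall.mp hpos
      set A := univ.filter fun j => ε j = -1
      have hA : A.Nonempty := ⟨j, by simpa [A] using (hε j).resolve_left hj⟩
      have hy : (fun j => C (ε j) * X (π j)) = A.piecewise (-(X ∘ π)) (X ∘ π) := by
        funext j
        rcases hε j with h | h <;> simp [A, Finset.piecewise, h, CharZero.eq_neg_self_iff]
      rw [hy, aeval_GammaC_piecewise_neg_comp_perm_eq_zero X π hA, mul_zero]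
end

section
/- Let n ≥ 1. In ℚ[x_1,…,x_n,y_1,…,y_n] set Φ_n := ∏_{1≤i<j≤n}(x_i − y_j); set c_i := ½(σ_i(x_1,…,x_n) + σ_i(y_1,…,y_n)) for 0 ≤ i ≤ n (σ_i the i-th elementary symmetric polynomial, σ_0 = 1, so c_0 = 1) and c_i := 0 for i < 0 or i > n; and set Γ_n := det((c_{n+1+j−2i})_{1≤i,j≤n}). The hyperoctahedral group W_n of signed permutations of {1,…,n} acts on ℚ[x_1,…,x_n] by signed permutation of the variables; for w ∈ W_n let e_w be the substitution fixing each x_i and sending y_j to w(x_j). Then e_{id}(Φ_n·Γ_n) = ∏_{1≤i<j≤n}(x_i − x_j)(x_i + x_j) · ∏_{i=1}^n x_i, the product of the positive roots of SO_{2n+1}, while e_w(Φ_n·Γ_n) = 0 for every w ≠ id. -/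
open MvPolynomial Finset

/-- `Φ_n := ∏_{1≤i<j≤n} (x_i − y_j)` in `ℚ[x_1,…,x_n,y_1,…,y_n]`, where the `x`-variables
are indexed by `Sum.inl` and the `y`-variables by `Sum.inr`. -/
noncomputable def PhiB (n : ℕ) : MvPolynomial (Fin n ⊕ Fin n) ℚ :=
  ∏ i : Fin n, ∏ j ∈ Finset.Ioi i, (X (Sum.inl i) - X (Sum.inr j))

/-- `c_k := ½(σ_k(x_1,…,x_n) + σ_k(y_1,…,y_n))` for `0 ≤ k ≤ n` (so `c_0 = 1`), and
`c_k := 0` otherwise (type `Bₙ` normalization). -/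
noncomputable def cB (n : ℕ) (k : ℤ) : MvPolynomial (Fin n ⊕ Fin n) ℚ :=
  if 0 ≤ k ∧ k ≤ (n : ℤ) then
    C (1 / 2 : ℚ) *
      (rename Sum.inl (esymm (Fin n) ℚ k.toNat) + rename Sum.inr (esymm (Fin n) ℚ k.toNat))
  else 0

/-- `Γ_n := det((c_{n+1+j−2i})_{1≤i,j≤n})`; with `0`-indexed `i, j` the entry is
`c_{n+j−2i}`. -/
noncomputable def GammaB (n : ℕ) : MvPolynomial (Fin n ⊕ Fin n) ℚ :=
  (Matrix.of fun i j : Fin n => cB n ((n : ℤ) + (j : ℤ) - 2 * (i : ℤ))).det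

/-! Put `f(T) = ½ (∏ (T + x_i) + ∏ (T + y_i)) = ∑ c_k T^(n-k)`. The entry of `Γ_n` in row `i` and
column `j`, counted from `0`, is the coefficient of `T^(2i)` in `T^j f`, so `Γ_n` is a Hurwitz
determinant.

For `y = x` it is the Hurwitz determinant of `∏ (T + x_i)`, which Orlando's formula evaluates to
`∏_{i<j} (x_i + x_j) ∏ x_i`: multiplying the matrix on the left by the Vandermonde matrix of the
`x_k²` evaluates the even part of `T^j f` at `x_k`, and since `-x_k` is a root of `f` this value is
`x_k ∏_{i≠k} (x_i + x_k) · x_k^j`.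

If `w` changes `m > 0` signs, then `f = u h` with `deg u = n - m` and `h(-T) = (-1)^m h(T)`, so
`T^(m-1) u(-T) f(T)` is odd. The coefficients of `T^(m-1) u(-T)` are therefore a nonzero vector in
the kernel, and `Γ_n` vanishes. If `w ≠ id` changes no sign, then `w(j) < j` for some `j`, and the
factor `x_{w(j)} - y_j` of `Φ_n` vanishes. -/

open scoped Polynomial

section HurwitzMatrix

variable {R : Type*} [CommSemiring R]

/-- The Hurwitz matrix of `f = ∑ a_k T^(n-k)`, up to transposing and reversing the order of both
rows and columns, which does not change its determinant: the entry `(i, j)` is the coefficient of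
`T^(2i)` in `T^j * f`, so the matrix represents `g ↦ (even part of g * f)` on polynomials `g` of
degree less than `n`. -/
noncomputable def hurwitzMatrix (n : ℕ) (f : R[X]) : Matrix (Fin n) (Fin n) R :=
  Matrix.of fun i j => (Polynomial.X ^ (j : ℕ) * f).coeff (2 * i)

lemma hurwitzMatrix_apply (n : ℕ) (f : R[X]) (i j : Fin n) :
    hurwitzMatrix n f i j = (Polynomial.X ^ (j : ℕ) * f).coeff (2 * i) :=
  rfl

lemma hurwitzMatrix_map {S : Type*} [CommSemiring S] (φ : R →+* S) (n : ℕ) (f : R[X]) :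
    hurwitzMatrix n (f.map φ) = (hurwitzMatrix n f).map φ := by
  ext i j
  simp only [hurwitzMatrix_apply, Matrix.map_apply, ← Polynomial.coeff_map, Polynomial.map_mul,
    Polynomial.map_pow, Polynomial.map_X]

lemma hurwitzMatrix_mulVec_coeff {n : ℕ} {f g : R[X]} (hg : g.natDegree < n) :
    (hurwitzMatrix n f).mulVec (fun j => g.coeff j) = fun i : Fin n => (g * f).coeff (2 * i) := by
  ext i
  conv_rhs => rw [g.as_sum_range_C_mul_X_pow' hg, Finset.sum_range]
  simp only [Matrix.mulVec, dotProduct, hurwitzMatrix_apply, sum_mul, Polynomial.finsetSum_coeff,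
    mul_assoc, Polynomial.coeff_C_mul]
  exact sum_congr rfl fun j _ => mul_comm _ _

lemma det_hurwitzMatrix_eq_zero {R : Type*} [CommRing R] [IsDomain R] {n : ℕ} {f g : R[X]}
    (hg : g ≠ 0) (hdeg : g.natDegree < n) (heven : ∀ i, (g * f).coeff (2 * i) = 0) :
    (hurwitzMatrix n f).det = 0 := by
  refine Matrix.exists_mulVec_eq_zero_iff.1 ⟨fun j => g.coeff j, fun h => hg ?_, ?_⟩
  · exact Polynomial.leadingCoeff_eq_zero.1 (congrFun h ⟨g.natDegree, hdeg⟩)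
  · rw [hurwitzMatrix_mulVec_coeff hdeg]
    exact funext fun i => heven i

end HurwitzMatrix

section LinearFactors

variable {R : Type*} [CommSemiring R]

lemma sum_range_coeff_X_add_C_mul (a : R) (p : R[X]) (m : ℕ) :
    ∑ i ∈ range (m + 1), a ^ (2 * i) * ((Polynomial.X + Polynomial.C a) * p).coeff (2 * i)
      = a * ∑ s ∈ range (2 * m + 1), p.coeff s * a ^ s := by
  induction m with
  | zero => simp [Polynomial.mul_coeff_zero]
  | succ m ih =>
    have hcoeff : ((Polynomial.X + Polynomial.C a) * p).coeff (2 * (m + 1))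
        = p.coeff (2 * m + 1) + a * p.coeff (2 * m + 2) := by
      rw [add_mul, Polynomial.coeff_add, Polynomial.coeff_C_mul, mul_add_one,
        Polynomial.coeff_X_mul]
    rw [sum_range_succ, ih, hcoeff, mul_add_one, sum_range_succ _ (2 * m + 2),
      sum_range_succ _ (2 * m + 1)]
    ring

lemma sum_coeff_two_mul_X_add_C_mul (a : R) {p : R[X]} {n : ℕ} (hp : p.natDegree + 1 < 2 * n) :
    ∑ i : Fin n, a ^ (2 * (i : ℕ)) *
        ((Polynomial.X + Polynomial.C a) * p).coeff (2 * i) = a * p.eval a := by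
  obtain ⟨m, rfl⟩ : ∃ m, n = m + 1 := Nat.exists_eq_add_one.2 (by omega)
  rw [Polynomial.eval_eq_sum_range' (show p.natDegree < 2 * m + 1 by omega),
    ← sum_range_coeff_X_add_C_mul, Finset.sum_range]

lemma natDegree_prod_X_add_C_le {ι : Type*} (s : Finset ι) (x : ι → R) :
    (∏ i ∈ s, (Polynomial.X + Polynomial.C (x i))).natDegree ≤ #s := by
  refine (Polynomial.natDegree_prod_le _ _).trans ?_
  simpa using sum_le_card_nsmul s _ 1 fun i _ =>
    (Polynomial.natDegree_add_C (p := Polynomial.X) (a := x i)).trans_le Polynomial.natDegree_X_le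

lemma prod_prod_compl_add {ι : Type*} [Fintype ι] [LinearOrder ι] [LocallyFiniteOrderTop ι]
    [LocallyFiniteOrderBot ι] (x : ι → R) :
    ∏ k, ∏ i ∈ {k}ᶜ, (x i + x k) = (∏ i, ∏ j ∈ Ioi i, (x i + x j)) ^ 2 := by
  simp only [← prod_prod_Ioi_mul_eq_prod_prod_off_diag (fun i k => x i + x k), ← prod_pow]
  exact prod_congr rfl fun i _ => prod_congr rfl fun j _ => by ring

end LinearFactors

section Orlando

variable {R : Type*} [CommRing R]

lemma vandermonde_sq_mul_hurwitzMatrix {n : ℕ} (x : Fin n → R) :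
    Matrix.vandermonde (fun i => x i ^ 2) *
        hurwitzMatrix n (∏ i, (Polynomial.X + Polynomial.C (x i)))
      = Matrix.diagonal (fun k => x k * ∏ i ∈ {k}ᶜ, (x i + x k)) * Matrix.vandermonde x := by
  ext k j
  set q : R[X] := ∏ i ∈ {k}ᶜ, (Polynomial.X + Polynomial.C (x i)) with hq
  have hdeg : (Polynomial.X ^ (j : ℕ) * q).natDegree + 1 < 2 * n := by
    have hqdeg : q.natDegree ≤ n - 1 := by
      simpa [card_compl] using natDegree_prod_X_add_C_le {k}ᶜ x
    have := Polynomial.natDegree_mul_le_of_le (Polynomial.natDegree_X_pow_le (R := R) j) hqdeg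
    omega
  have heval : q.eval (x k) = ∏ i ∈ {k}ᶜ, (x i + x k) := by
    simp [hq, Polynomial.eval_prod, add_comm]
  rw [Matrix.mul_apply, Matrix.diagonal_mul, Fintype.prod_eq_mul_prod_compl k, ← hq]
  simp only [Matrix.vandermonde_apply, hurwitzMatrix_apply, ← pow_mul,
    mul_left_comm (Polynomial.X ^ (j : ℕ))]
  rw [sum_coeff_two_mul_X_add_C_mul _ hdeg, Polynomial.eval_mul, heval, Polynomial.eval_pow,
    Polynomial.eval_X]
  ring

lemma det_vandermonde_sq {n : ℕ} (x : Fin n → R) :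
    (Matrix.vandermonde fun i => x i ^ 2).det
      = (Matrix.vandermonde x).det * ∏ i : Fin n, ∏ j ∈ Ioi i, (x i + x j) := by
  simp only [Matrix.det_vandermonde, ← prod_mul_distrib]
  exact prod_congr rfl fun i _ => prod_congr rfl fun j _ => by ring

lemma det_vandermonde_sq_mul_det_hurwitzMatrix {n : ℕ} (x : Fin n → R) :
    (Matrix.vandermonde fun i => x i ^ 2).det *
        (hurwitzMatrix n (∏ i, (Polynomial.X + Polynomial.C (x i)))).det
      = (Matrix.vandermonde fun i => x i ^ 2).det *
        ((∏ i : Fin n, ∏ j ∈ Ioi i, (x i + x j)) * ∏ i, x i) := by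
  rw [← Matrix.det_mul, vandermonde_sq_mul_hurwitzMatrix, Matrix.det_mul, Matrix.det_diagonal,
    prod_mul_distrib, prod_prod_compl_add, det_vandermonde_sq]
  ring

lemma det_vandermonde_X_sq_ne_zero (n : ℕ) :
    (Matrix.vandermonde fun i : Fin n => (X i : MvPolynomial (Fin n) ℤ) ^ 2).det ≠ 0 := by
  refine Matrix.det_vandermonde_ne_zero_iff.2 fun i j hij => ?_
  simpa [X_pow_eq_monomial, monomial_left_inj, Finsupp.single_left_inj] using hij

/-- **Orlando's formula**. -/
theorem det_hurwitzMatrix_prod_X_add_C {n : ℕ} (x : Fin n → R) :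
    (hurwitzMatrix n (∏ i, (Polynomial.X + Polynomial.C (x i)))).det
      = (∏ i : Fin n, ∏ j ∈ Ioi i, (x i + x j)) * ∏ i, x i := by
  -- In the universal case, independent variables over `ℤ`, the Vandermonde factor cancels.
  have huniv := mul_left_cancel₀ (det_vandermonde_X_sq_ne_zero n)
    (det_vandermonde_sq_mul_det_hurwitzMatrix (X : Fin n → MvPolynomial (Fin n) ℤ))
  have hx := congrArg (aeval x).toRingHom huniv
  rw [RingHom.map_det, RingHom.mapMatrix_apply, ← hurwitzMatrix_map] at hx
  simpa [Polynomial.map_prod] using hx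

end Orlando

section Parity

variable {R : Type*} [CommRing R]

lemma coeff_comp_neg_X (p : R[X]) (k : ℕ) :
    (p.comp (-Polynomial.X)).coeff k = p.coeff k * (-1) ^ k := by
  simpa using Polynomial.comp_C_mul_X_coeff (p := p) (r := -1) (n := k)

lemma coeff_two_mul_eq_zero_of_comp_neg_X_eq_neg [NoZeroDivisors R] [NeZero (2 : R)] {p : R[X]}
    (hp : p.comp (-Polynomial.X) = -p) (i : ℕ) : p.coeff (2 * i) = 0 := by
  have h := congrArg (Polynomial.coeff · (2 * i)) hp
  simp only [coeff_comp_neg_X, (even_two_mul i).neg_one_pow, mul_one, Polynomial.coeff_neg] at h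
  exact (mul_eq_zero.1 (show 2 * p.coeff (2 * i) = 0 by linear_combination h)).resolve_left
    two_ne_zero

lemma det_hurwitzMatrix_mul_eq_zero [IsDomain R] [NeZero (2 : R)] {n m : ℕ} {u h : R[X]}
    (hu : u ≠ 0) (hm : 0 < m) (hh : h.comp (-Polynomial.X) = (-1) ^ m * h)
    (hdeg : u.natDegree + m ≤ n) : (hurwitzMatrix n (u * h)).det = 0 := by
  obtain ⟨k, rfl⟩ : ∃ k, m = k + 1 := Nat.exists_eq_add_one.2 hm
  -- `X ^ k * u(-X)` times `u * h` is odd, because `u(-X) * u` is even.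
  have hodd : (Polynomial.X ^ k * u.comp (-Polynomial.X) * (u * h)).comp (-Polynomial.X)
      = -(Polynomial.X ^ k * u.comp (-Polynomial.X) * (u * h)) := by
    have hsign : ((-1 : R[X]) ^ k) ^ 2 = 1 := by rw [← pow_mul, pow_mul', neg_one_sq, one_pow]
    simp only [Polynomial.mul_comp, Polynomial.X_pow_comp, Polynomial.comp_neg_X_comp_neg_X, hh,
      neg_pow (Polynomial.X : R[X]) k]
    linear_combination
      -(Polynomial.X ^ k * u.comp (-Polynomial.X) * u * h) * hsign
  refine det_hurwitzMatrix_eq_zero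
    (mul_ne_zero (pow_ne_zero k Polynomial.X_ne_zero) (Polynomial.comp_neg_X_eq_zero_iff.not.2 hu))
    ?_ (coeff_two_mul_eq_zero_of_comp_neg_X_eq_neg hodd)
  calc (Polynomial.X ^ k * u.comp (-Polynomial.X)).natDegree
      ≤ k + u.natDegree := Polynomial.natDegree_mul_le_of_le (Polynomial.natDegree_X_pow_le k)
        (Polynomial.natDegree_eq_of_degree_eq Polynomial.degree_comp_neg_X).le
    _ < n := by omega

lemma prod_X_add_C_comp_neg_X {ι : Type*} (s : Finset ι) (x : ι → R) :
    (∏ i ∈ s, (Polynomial.X + Polynomial.C (x i))).comp (-Polynomial.X)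
      = (-1) ^ #s * ∏ i ∈ s, (Polynomial.X + Polynomial.C (-x i)) := by
  rw [Polynomial.prod_comp, ← prod_const, ← prod_mul_distrib]
  refine prod_congr rfl fun i _ => ?_
  simp only [Polynomial.add_comp, Polynomial.X_comp, Polynomial.C_comp, Polynomial.C_neg]
  ring

lemma det_hurwitzMatrix_prod_add_prod_eq_zero [IsDomain R] [NeZero (2 : R)] {n : ℕ} (a : R)
    {x y : Fin n → R} {s : Finset (Fin n)} (hs : s.Nonempty) (hneg : ∀ i ∈ s, y i = -x i)
    (heq : ∀ i ∉ s, y i = x i) :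
    (hurwitzMatrix n (Polynomial.C a * (∏ i, (Polynomial.X + Polynomial.C (x i)) +
      ∏ i, (Polynomial.X + Polynomial.C (y i))))).det = 0 := by
  set u : R[X] := ∏ i ∈ sᶜ, (Polynomial.X + Polynomial.C (x i))
  set p : R[X] := ∏ i ∈ s, (Polynomial.X + Polynomial.C (x i)) with hp
  set q : R[X] := ∏ i ∈ s, (Polynomial.X + Polynomial.C (-x i)) with hq
  have hx : ∏ i, (Polynomial.X + Polynomial.C (x i)) = p * u := (prod_mul_prod_compl s _).symm
  have hy : ∏ i, (Polynomial.X + Polynomial.C (y i)) = q * u := by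
    rw [← prod_mul_prod_compl s]
    congr 1
    · exact prod_congr rfl fun i hi => by rw [hneg i hi]
    · exact prod_congr rfl fun i hi => by rw [heq i (mem_compl.1 hi)]
  have hparity : (Polynomial.C a * (p + q)).comp (-Polynomial.X)
      = (-1) ^ #s * (Polynomial.C a * (p + q)) := by
    simp only [Polynomial.mul_comp, Polynomial.C_comp, Polynomial.add_comp, hp, hq,
      prod_X_add_C_comp_neg_X, neg_neg]
    ring
  have hdeg : u.natDegree + #s ≤ n := by
    calc u.natDegree + #s ≤ #sᶜ + #s := by gcongr; exact natDegree_prod_X_add_C_le sᶜ x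
      _ = n := by rw [card_compl_add_card, Fintype.card_fin]
  rw [hx, hy, show Polynomial.C a * (p * u + q * u) = u * (Polynomial.C a * (p + q)) by ring]
  exact det_hurwitzMatrix_mul_eq_zero
    (Polynomial.monic_prod_of_monic _ _ fun i _ => Polynomial.monic_X_add_C _).ne_zero
    hs.card_pos hparity hdeg

end Parity

lemma perm_eq_one_of_forall_le_apply {α : Type*} [Finite α] [PartialOrder α] {π : Equiv.Perm α}
    (hπ : ∀ a, a ≤ π a) : π = 1 := by
  ext a
  refine le_antisymm ?_ (hπ a)
  calc π a ≤ π^[orderOf π - 1] (π a) := Function.id_le_iterate_of_id_le hπ _ _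
    _ = a := by
      rw [← Function.iterate_succ_apply, Nat.succ_eq_add_one, Nat.sub_add_cancel (orderOf_pos π),
        Equiv.Perm.iterate_eq_pow, pow_orderOf_eq_one, Equiv.Perm.one_apply]

section DiagonalClass

/-- The generating polynomial `∑ c_k T^(n-k)` of the classes `c_k`, in its factored form
`½ (∏ (T + x_i) + ∏ (T + y_i))`. -/
noncomputable def chernPolyB (n : ℕ) : (MvPolynomial (Fin n ⊕ Fin n) ℚ)[X] :=
  Polynomial.C (C (1 / 2)) * (∏ i, (Polynomial.X + Polynomial.C (X (Sum.inl i))) +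
    ∏ i, (Polynomial.X + Polynomial.C (X (Sum.inr i))))

lemma coeff_prod_X_add_C_X {R σ τ : Type*} [CommSemiring R] [Fintype σ] (e : σ → τ) {m : ℕ}
    (hm : m ≤ Fintype.card σ) :
    (∏ i, (Polynomial.X + Polynomial.C (X (e i) : MvPolynomial τ R))).coeff m
      = rename e (esymm σ R (Fintype.card σ - m)) := by
  rw [← MvPolynomial.prod_X_add_C_coeff (R := R) (k := m) (h := hm), ← AlgHom.coe_toRingHom,
    ← Polynomial.coeff_map]
  simp [Polynomial.map_prod]

lemma coeff_chernPolyB (n m : ℕ) : (chernPolyB n).coeff m = cB n (n - m) := by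
  rw [chernPolyB, Polynomial.coeff_C_mul, Polynomial.coeff_add, cB]
  split_ifs with h
  · have hm : m ≤ Fintype.card (Fin n) := by rw [Fintype.card_fin]; omega
    rw [coeff_prod_X_add_C_X _ hm, coeff_prod_X_add_C_X _ hm, Fintype.card_fin,
      show ((n : ℤ) - m).toNat = n - m by omega]
  · have hm (x : Fin n → MvPolynomial (Fin n ⊕ Fin n) ℚ) :
        (∏ i, (Polynomial.X + Polynomial.C (x i))).natDegree < m := by
      have := natDegree_prod_X_add_C_le univ x
      rw [card_fin] at this
      omega
    rw [Polynomial.coeff_eq_zero_of_natDegree_lt (hm _),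
      Polynomial.coeff_eq_zero_of_natDegree_lt (hm _), add_zero, mul_zero]

lemma coeff_X_pow_mul_chernPolyB (n j m : ℕ) :
    (Polynomial.X ^ j * chernPolyB n).coeff m = cB n (n + j - m) := by
  rw [Polynomial.coeff_X_pow_mul']
  split_ifs with h
  · rw [coeff_chernPolyB]
    congr 1
    omega
  · exact (if_neg (by omega)).symm

lemma GammaB_eq_det_hurwitzMatrix (n : ℕ) : GammaB n = (hurwitzMatrix n (chernPolyB n)).det := by
  rw [GammaB]
  congr 1
  ext1 i j
  rw [Matrix.of_apply, hurwitzMatrix_apply, coeff_X_pow_mul_chernPolyB]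
  push_cast
  rfl

variable {R : Type*} [CommRing R] [Algebra ℚ R] {n : ℕ}

lemma aeval_GammaB (x y : Fin n → R) :
    aeval (Sum.elim x y) (GammaB n) = (hurwitzMatrix n (Polynomial.C (algebraMap ℚ R (1 / 2)) *
      (∏ i, (Polynomial.X + Polynomial.C (x i)) +
        ∏ i, (Polynomial.X + Polynomial.C (y i))))).det := by
  rw [GammaB_eq_det_hurwitzMatrix, ← AlgHom.coe_toRingHom, RingHom.map_det,
    RingHom.mapMatrix_apply, ← hurwitzMatrix_map]
  simp only [chernPolyB, Polynomial.map_mul, Polynomial.map_add, Polynomial.map_prod,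
    Polynomial.map_C, Polynomial.map_X, AlgHom.coe_toRingHom, aeval_C, aeval_X, Sum.elim_inl,
    Sum.elim_inr]

lemma aeval_GammaB_self (x : Fin n → R) :
    aeval (Sum.elim x x) (GammaB n) = (∏ i : Fin n, ∏ j ∈ Ioi i, (x i + x j)) * ∏ i, x i := by
  have hhalf : algebraMap ℚ R (1 / 2) * 2 = 1 := by
    rw [← map_ofNat (algebraMap ℚ R) 2, ← map_mul]
    norm_num
  rw [aeval_GammaB, ← two_mul, ← mul_assoc, ← Polynomial.C_ofNat, ← Polynomial.C_mul, hhalf,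
    Polynomial.C_1, one_mul, det_hurwitzMatrix_prod_X_add_C]

lemma aeval_GammaB_eq_zero [IsDomain R] {x y : Fin n → R} (π : Equiv.Perm (Fin n))
    {s : Finset (Fin n)} (hs : s.Nonempty) (hneg : ∀ i ∈ s, y i = -x (π i))
    (heq : ∀ i ∉ s, y i = x (π i)) : aeval (Sum.elim x y) (GammaB n) = 0 := by
  have := algebraRat.charZero R
  rw [aeval_GammaB, ← Equiv.prod_comp π]
  exact det_hurwitzMatrix_prod_add_prod_eq_zero _ hs hneg heq

lemma aeval_PhiB (x y : Fin n → R) :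
    aeval (Sum.elim x y) (PhiB n) = ∏ i : Fin n, ∏ j ∈ Ioi i, (x i - y j) := by
  simp only [PhiB, map_prod, map_sub, aeval_X, Sum.elim_inl, Sum.elim_inr]

lemma aeval_PhiB_perm_eq_zero (x : Fin n → R) {π : Equiv.Perm (Fin n)} (hπ : π ≠ 1) :
    aeval (Sum.elim x fun j => x (π j)) (PhiB n) = 0 := by
  obtain ⟨j, hj⟩ : ∃ j, π j < j := by
    by_contra! hle
    exact hπ (perm_eq_one_of_forall_le_apply hle)
  rw [aeval_PhiB]
  exact prod_eq_zero (mem_univ (π j)) (prod_eq_zero (mem_Ioi.2 hj) (sub_self _))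

end DiagonalClass

/-- type `Bₙ`.  For a signed permutation `w = (π, ε)` of `{1,…,n}`
(`ε j ∈ {1,−1}`) let `e_w` be the substitution fixing the `x_i` and sending
`y_j ↦ ε_j·x_{π(j)}`.  Then `e_id(Φ_n·Γ_n) = ∏_{i<j}(x_i−x_j)(x_i+x_j)·∏_i x_i`, the
product of the positive roots of `SO_{2n+1}`, while `e_w(Φ_n·Γ_n) = 0` for every
`w ≠ id`. -/
theorem stmt_7 (n : ℕ) (hn : 1 ≤ n) :
    (aeval (Sum.elim (fun i => X i) fun j => (X j : MvPolynomial (Fin n) ℚ)))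
        (PhiB n * GammaB n)
      = (∏ i : Fin n, ∏ j ∈ Finset.Ioi i, ((X i - X j) * (X i + X j))) *
          ∏ i : Fin n, X i
    ∧ ∀ (π : Equiv.Perm (Fin n)) (ε : Fin n → ℚ), (∀ j, ε j = 1 ∨ ε j = -1) →
        ¬(π = 1 ∧ ε = fun _ => 1) →
        (aeval (Sum.elim (fun i => X i) fun j => C (ε j) * X (π j)))
            (PhiB n * GammaB n) = 0 := by
  constructor
  · rw [map_mul, aeval_PhiB, aeval_GammaB_self, ← mul_assoc]
    simp only [prod_mul_distrib]
  intro π ε hε hw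
  rw [map_mul]
  by_cases hs : (univ.filter fun j => ε j = -1).Nonempty
  · rw [aeval_GammaB_eq_zero π hs, mul_zero]
    · intro j hj
      simp [(mem_filter.1 hj).2]
    · intro j hj
      simp [(hε j).resolve_right fun h => hj (mem_filter.2 ⟨mem_univ j, h⟩)]
  · have hε1 : ε = fun _ => 1 := funext fun j =>
      (hε j).resolve_right fun h => hs ⟨j, mem_filter.2 ⟨mem_univ j, h⟩⟩
    have hπ : π ≠ 1 := fun h => hw ⟨h, hε1⟩
    simp only [hε1, C_1, one_mul]
    rw [aeval_PhiB_perm_eq_zero X hπ, zero_mul]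
end

section
/- Let g ≥ 1 and let W = {w ∈ S_{2g} : w(i) + w(2g+1−i) = 2g+1 for all i} with simple reflections s_i = τ_{i,i+1}·τ_{2g−i,2g+1−i} (1 ≤ i ≤ g−1), s_g = τ_{g,g+1}, and I = {s_1,…,s_{g−1}}. Let z ∈ W be the element [g+1, g+2, …, 2g, 1, 2, …, g] in one-line notation. For w ∈ W define σ_w : W → W by σ_w(x) = (wz)·x·(wz)⁻¹ and I_w := {s ∈ I : σ_w^k(s) ∈ I for all k ≥ 1}. For 0 ≤ f ≤ g let u_f ∈ W be the element with one-line notation [g+1, …, g+f, 1, g+f+1, …, 2g−1, 2, …, g−f, 2g, g−f+1, …, g]. Then I_{u_f} = I ∖ {s_1, s_2, …, s_{g−f}}; in particular I_{u_g} = I and I_{u_1} = I_{u_0} = ∅. -/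
/-- The simple reflections `s_i` (`1 ≤ i ≤ g`) of the Weyl group of `GSp_{2g}` (type
`C_g`), realized inside the symmetric group of `{0,…,2g−1}` (the `0`-indexed version of
`{1,…,2g}`): for `1 ≤ i ≤ g−1`, `s_i = τ_{i,i+1}·τ_{2g−i,2g+1−i}`, and
`s_g = τ_{g,g+1}` (`1`-indexed); `sgen g i = 1` for `i` outside `{1,…,g}`. -/
def sgen (g : ℕ) (i : ℕ) : Equiv.Perm (Fin (2 * g)) :=
  if h : 1 ≤ i ∧ i ≤ g - 1 then
    Equiv.swap ⟨i - 1, by omega⟩ ⟨i, by omega⟩ *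
      Equiv.swap ⟨2 * g - i - 1, by omega⟩ ⟨2 * g - i, by omega⟩
  else if h2 : i = g ∧ 1 ≤ g then
    Equiv.swap ⟨g - 1, by omega⟩ ⟨g, by omega⟩
  else 1

/-- The `0`-indexed one-line notation of the element
`u_f = [g+1, …, g+f, 1, g+f+1, …, 2g−1, 2, …, g−f, 2g, g−f+1, …, g]` of the Weyl group of
`GSp_{2g}` (for `0 ≤ f ≤ g` and `0 ≤ i ≤ 2g−1`). -/
def uLine (g f i : ℕ) : ℕ :=
  if i < f then g + i
  else if i = f then 0
  else if i ≤ g - 1 then g + i - 1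
  else if i ≤ 2 * g - f - 2 then i - g + 1
  else if i = 2 * g - f - 1 then 2 * g - 1
  else i - g

/-!
The permutation `v = u_f z` commutes with `x ↦ 2g-1-x`; for `f < g` it is the cycle
`0 → 1 → ⋯ → g-f-1 → 2g-1 → 2g-2 → ⋯ → g+f → 0`, and for `f = g` it is the identity. As it
commutes with this reversal, conjugation by `v` sends `s_i` to `s_j` as soon as `v` sends the
adjacent pair `(i-1, i)` to `(j-1, j)`, with `i` and `j` below `g`. So `s_i` is fixed for
`g-f < i < g`, and it is shifted to `s_{i+1}` for `i+1 < g-f`; iterating brings each `s_i` with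
`i < g-f` to `s_{g-f-1}`. The conjugates of `s_{g-f-1}` and `s_{g-f}` both move `2g-1` to the lower
half `{0, …, g-1}`, whereas every element of `I` preserves the two halves.
-/

/-- The `0`-indexed one-line notation of `u_f z`, the element of `W` conjugation by which is
`σ_{u_f}`. -/
def uzLine (g f x : ℕ) : ℕ :=
  if x + f + 1 < g then x + 1
  else if x + f + 1 = g then 2 * g - 1
  else if x < g + f then x
  else if x = g + f then 0
  else x - 1

section SimpleReflections

variable {g : ℕ} {a b : Fin (2 * g)}

lemma sgen_eq_swap_mul_swap (hab : (a : ℕ) + 1 = b) (hb : (b : ℕ) < g) :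
    sgen g b = Equiv.swap a b * Equiv.swap b.rev a.rev := by
  rw [sgen, dif_pos (by omega)]
  congr 2 <;> simp only [Fin.ext_iff, Fin.val_rev] <;> omega

lemma sgen_eq_swap (hab : (a : ℕ) + 1 = b) (hb : (b : ℕ) = g) : sgen g b = Equiv.swap a b := by
  rw [sgen, dif_neg (by omega), dif_pos (by omega)]
  congr 1 <;> simp only [Fin.ext_iff] <;> omega

lemma sgen_apply_left (hab : (a : ℕ) + 1 = b) (hb : (b : ℕ) ≤ g) : sgen g b a = b := by
  obtain hlt | heq := hb.lt_or_eq
  · have hfix : Equiv.swap b.rev a.rev a = a :=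
      Equiv.swap_apply_of_ne_of_ne (by simp only [ne_eq, Fin.ext_iff, Fin.val_rev]; omega)
        (by simp only [ne_eq, Fin.ext_iff, Fin.val_rev]; omega)
    rw [sgen_eq_swap_mul_swap hab hlt, Equiv.Perm.mul_apply, hfix, Equiv.swap_apply_left]
  · rw [sgen_eq_swap hab heq, Equiv.swap_apply_left]

lemma sgen_apply_right (hab : (a : ℕ) + 1 = b) (hb : (b : ℕ) < g) : sgen g b b = a := by
  have hfix : Equiv.swap b.rev a.rev b = b :=
    Equiv.swap_apply_of_ne_of_ne (by simp only [ne_eq, Fin.ext_iff, Fin.val_rev]; omega)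
      (by simp only [ne_eq, Fin.ext_iff, Fin.val_rev]; omega)
  rw [sgen_eq_swap_mul_swap hab hb, Equiv.Perm.mul_apply, hfix, Equiv.swap_apply_right]

lemma le_sgen_apply {i : ℕ} (hi : i ∈ Set.Icc 1 (g - 1)) {x : Fin (2 * g)} (hx : g ≤ (x : ℕ)) :
    g ≤ (sgen g i x : ℕ) := by
  obtain ⟨hi1, hig⟩ := hi
  rw [sgen, dif_pos ⟨hi1, hig⟩, Equiv.Perm.mul_apply, Equiv.swap_apply_def, Equiv.swap_apply_def]
  simp only [Fin.ext_iff]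
  split_ifs <;> grind

lemma notMem_image_sgen_of_apply_lt {p : Equiv.Perm (Fin (2 * g))} {x : Fin (2 * g)}
    (hx : g ≤ (x : ℕ)) (hpx : (p x : ℕ) < g) : p ∉ sgen g '' Set.Icc 1 (g - 1) := by
  rintro ⟨i, hi, rfl⟩
  exact hpx.not_ge (le_sgen_apply hi hx)

/- The Weyl group `W` is the centralizer of `Fin.revPerm`. -/
lemma conj_sgen_of_commute_revPerm {v : Equiv.Perm (Fin (2 * g))} (hv : Commute v Fin.revPerm)
    (hab : (a : ℕ) + 1 = b) (hb : (b : ℕ) < g) (hvab : (v a : ℕ) + 1 = v b)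
    (hvb : (v b : ℕ) < g) : MulAut.conj v (sgen g b) = sgen g (v b) := by
  have hrev (x : Fin (2 * g)) : (v x).rev = v x.rev := (Equiv.congr_fun hv.eq x).symm
  rw [sgen_eq_swap_mul_swap hab hb, sgen_eq_swap_mul_swap hvab hvb, map_mul, MulAut.conj_apply,
    MulAut.conj_apply, ← Equiv.swap_apply_apply, ← Equiv.swap_apply_apply, hrev, hrev]

end SimpleReflections

lemma mul_apply_eq_uzLine {g f : ℕ} (hf : f ≤ g) {u z : Equiv.Perm (Fin (2 * g))}
    (hu : ∀ i, (u i : ℕ) = uLine g f i)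
    (hz : ∀ i, (z i : ℕ) = if (i : ℕ) < g then g + (i : ℕ) else (i : ℕ) - g)
    (x : Fin (2 * g)) : ((u * z) x : ℕ) = uzLine g f x := by
  rw [Equiv.Perm.mul_apply, hu, hz]
  unfold uLine uzLine
  split_ifs <;> omega

section Conjugation

variable {g f i : ℕ} {v : Equiv.Perm (Fin (2 * g))}

lemma commute_revPerm_of_uzLine (hv : ∀ x, (v x : ℕ) = uzLine g f x) :
    Commute v Fin.revPerm := by
  ext x
  simp only [Equiv.Perm.mul_apply, Fin.revPerm_apply, Fin.val_rev, hv]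
  unfold uzLine
  split_ifs <;> omega

lemma conj_sgen_eq_succ (hv : ∀ x, (v x : ℕ) = uzLine g f x) (hi : 1 ≤ i) (hif : i + 1 < g - f) :
    MulAut.conj v (sgen g i) = sgen g (i + 1) := by
  have hva : (v ⟨i - 1, by omega⟩ : ℕ) = i := by
    rw [hv, uzLine, if_pos (by grind), Nat.sub_add_cancel hi]
  have hvb : (v ⟨i, by omega⟩ : ℕ) = i + 1 := by rw [hv, uzLine, if_pos (by grind)]
  rw [← hvb]
  exact conj_sgen_of_commute_revPerm (a := ⟨i - 1, by omega⟩) (b := ⟨i, by omega⟩)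
    (commute_revPerm_of_uzLine hv) (Nat.sub_add_cancel hi) (by grind) (by rw [hva, hvb]) (by omega)

lemma conj_sgen_eq_self (hv : ∀ x, (v x : ℕ) = uzLine g f x) (hif : g - f < i) (hig : i < g) :
    MulAut.conj v (sgen g i) = sgen g i := by
  have hfixed (x : Fin (2 * g)) (hfx : g - f ≤ x) (hxg : (x : ℕ) < g) : (v x : ℕ) = x := by
    rw [hv, uzLine, if_neg (by omega), if_neg (by omega), if_pos (by omega)]
  have hva : (v ⟨i - 1, by omega⟩ : ℕ) = i - 1 := hfixed _ (by grind) (by grind)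
  have hvb : (v ⟨i, by omega⟩ : ℕ) = i := hfixed _ hif.le hig
  conv_rhs => rw [← hvb]
  exact conj_sgen_of_commute_revPerm (a := ⟨i - 1, by omega⟩) (b := ⟨i, by omega⟩)
    (commute_revPerm_of_uzLine hv) (by grind) hig (by omega) (by omega)

/- For `i = g - f` the truncated subtraction leaves only `k = 0`. -/
lemma conj_pow_sgen_eq_add (hv : ∀ x, (v x : ℕ) = uzLine g f x) (hi : 1 ≤ i) {k : ℕ}
    (hk : k ≤ g - f - 1 - i) : MulAut.conj (v ^ k) (sgen g i) = sgen g (i + k) := by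
  induction k with
  | zero => simp only [pow_zero, map_one, MulAut.one_apply, add_zero]
  | succ k ih =>
    rw [pow_succ', map_mul, MulAut.mul_apply, ih (by omega),
      conj_sgen_eq_succ hv (by omega) (by omega), add_assoc]

lemma conj_sgen_notMem (hv : ∀ x, (v x : ℕ) = uzLine g f x) (hi : 1 ≤ i) (hif : i ≤ g - f)
    (hfi : g - f ≤ i + 1) : MulAut.conj v (sgen g i) ∉ sgen g '' Set.Icc 1 (g - 1) := by
  let c : Fin (2 * g) := ⟨g - f - 1, by omega⟩
  have hvc : (v c : ℕ) = 2 * g - 1 := by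
    rw [hv, uzLine, if_neg (by grind), if_pos (by grind)]
  have hconj : MulAut.conj v (sgen g i) (v c) = v (sgen g i c) := by
    rw [MulAut.conj_apply, Equiv.Perm.mul_apply, Equiv.Perm.mul_apply, Equiv.Perm.coe_inv,
      Equiv.symm_apply_apply]
  refine notMem_image_sgen_of_apply_lt (x := v c) (by omega) ?_
  obtain rfl | rfl : i = g - f - 1 ∨ i = g - f := by omega
  · have hs : sgen g (g - f - 1) c = ⟨g - f - 2, by omega⟩ :=
      sgen_apply_right (b := c) (by grind) (by grind)
    rw [hconj, hs, hv, uzLine, if_pos (by grind)]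
    grind
  · have hs : sgen g (g - f) c = ⟨g - f, by omega⟩ :=
      sgen_apply_left (b := ⟨g - f, by omega⟩) (by grind) (by grind)
    rw [hconj, hs, hv]
    dsimp only [uzLine]
    split_ifs <;> omega

lemma exists_conj_pow_sgen_notMem (hv : ∀ x, (v x : ℕ) = uzLine g f x) (hi : 1 ≤ i)
    (hif : i ≤ g - f) :
    ∃ k, 1 ≤ k ∧ MulAut.conj (v ^ k) (sgen g i) ∉ sgen g '' Set.Icc 1 (g - 1) := by
  refine ⟨g - f - 1 - i + 1, Nat.le_add_left _ _, ?_⟩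
  rw [pow_succ', map_mul, MulAut.mul_apply, conj_pow_sgen_eq_add hv hi le_rfl]
  exact conj_sgen_notMem hv (by omega) (by omega) (by omega)

lemma conj_pow_sgen_eq_self (hv : ∀ x, (v x : ℕ) = uzLine g f x) (hif : g - f < i) (hig : i < g)
    (k : ℕ) : MulAut.conj (v ^ k) (sgen g i) = sgen g i := by
  have hcomm : Commute v (sgen g i) := mul_inv_eq_iff_eq_mul.mp (conj_sgen_eq_self hv hif hig)
  exact (hcomm.pow_left k).mul_inv_cancel

end Conjugation

/-- Let `g ≥ 1`, `W` the Weyl group of `GSp_{2g}` in `S_{2g}` with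
simple reflections `s_1,…,s_g`, `I = {s_1,…,s_{g−1}}`, and `z = [g+1,…,2g,1,…,g]` in
one-line notation.  For `w ∈ W` let `σ_w(x) = (wz)·x·(wz)⁻¹` and
`I_w = {s ∈ I : σ_w^k(s) ∈ I for all k ≥ 1}`.  For `0 ≤ f ≤ g` let `u_f` be the element
with one-line notation `[g+1,…,g+f, 1, g+f+1,…,2g−1, 2,…,g−f, 2g, g−f+1,…,g]`.  Then
`I_{u_f} = I ∖ {s_1, s_2, …, s_{g−f}}`. -/
theorem stmt_13 (g : ℕ) (hg : 1 ≤ g)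
    (z : Equiv.Perm (Fin (2 * g)))
    (hz : ∀ i : Fin (2 * g),
      (z i : ℕ) = if (i : ℕ) < g then g + (i : ℕ) else (i : ℕ) - g)
    (u : ℕ → Equiv.Perm (Fin (2 * g)))
    (hu : ∀ f ≤ g, ∀ i : Fin (2 * g), (u f i : ℕ) = uLine g f i) :
    ∀ f ≤ g,
      {t ∈ sgen g '' Set.Icc 1 (g - 1) |
          ∀ k : ℕ, 1 ≤ k →
            (u f * z) ^ k * t * ((u f * z) ^ k)⁻¹ ∈ sgen g '' Set.Icc 1 (g - 1)}
        = (sgen g '' Set.Icc 1 (g - 1)) \ (sgen g '' Set.Icc 1 (g - f)) := by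
  intro f hf
  have hv := mul_apply_eq_uzLine hf (hu f hf) hz
  ext t
  constructor
  · rintro ⟨ht, hconj⟩
    refine ⟨ht, ?_⟩
    rintro ⟨i, ⟨hi, hif⟩, rfl⟩
    obtain ⟨k, hk, hnotMem⟩ := exists_conj_pow_sgen_notMem hv hi hif
    exact hnotMem (hconj k hk)
  · rintro ⟨⟨i, hi, rfl⟩, hnotMem⟩
    have hif : g - f < i := by
      by_contra! hle
      exact hnotMem ⟨i, ⟨hi.1, hle⟩, rfl⟩
    have hig : i < g := by grind
    exact ⟨⟨i, hi, rfl⟩, fun k _ => ⟨i, hi, (conj_pow_sgen_eq_self hv hif hig k).symm⟩⟩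
end

section
/- Let p be an indeterminate (or any element of ℚ) and work in the polynomial ring ℚ(p)[x_1, x_2, y_1, y_2] (equivalently ℚ[p][x_1,x_2,y_1,y_2]). Define the operators δ_1(f) = (f(x_1,x_2,y_1,y_2) − f(x_2,x_1,y_1,y_2))/(x_1 − x_2) and δ_2(f) = (f(x_1,x_2,y_1,y_2) − f(x_1,−x_2,y_1,y_2))/(2x_2), and the algebra homomorphism ψ : ℚ(p)[x_1,x_2,y_1,y_2] → ℚ(p)[x_1,x_2] given by x_1 ↦ −x_2, x_2 ↦ −x_1, y_1 ↦ p·x_1, y_2 ↦ p·x_2. Set Φ := x_1 − y_2 and Γ := (x_1 + x_2 + y_1 + y_2)(x_1x_2 + y_1y_2). Then: ψ(ΦΓ) = −(p⁴−1)(x_1+x_2)x_1x_2²; ψ(δ_2(ΦΓ)) = −(p²−1)(p x_1 − x_2)x_2²; ψ(δ_2δ_1(ΦΓ)) = (p−1)(p x_1 − x_2)x_2; and ψ(δ_2δ_1δ_2(ΦΓ)) = p x_1 − x_2. -/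
open MvPolynomial

/-!
A divided difference `δ f = (f - s f) / α` satisfies the twisted Leibniz rule
`δ (f * g) = δ f * g + s f * δ g`, so it is linear over the `s`-invariants.  Here `Γ` is symmetric
in `x₁, x₂`, and `Φ` does not involve `x₂`; hence `δ₁ (Φ * Γ) = δ₁ Φ * Γ = Γ` and
`δ₂ (Φ * Γ) = Φ * δ₂ Γ`, while `δ₂ Γ` factors as `(x₁ + y₁) * (x₁ + y₂)`.  The
fourth class comes from `δ₁ ((x₁² - y₂²) * (x₁ + y₁))`: its Leibniz expansion is
`(x₁ + y₁) * (x₁ + x₂)` plus a term fixed by `s₂`, so `δ₂` sends it to `x₁ + y₁`.  All four classes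
are therefore products of factors whose images under `ψ` are immediate.
-/

/-- `δ` is the divided difference operator `f ↦ (f - s f) / α`.  The division is encoded by
multiplying by `α`, whose regularity makes `δ` unique.  For a simple reflection `s` with root `α`
this is the Demazure operator. -/
structure IsDividedDifference {A : Type*} [CommRing A] (α : A) (s δ : A → A) : Prop where
  isRegular : IsRegular α
  mul_apply (f : A) : α * δ f = f - s f

namespace IsDividedDifference

variable {A F : Type*} [CommRing A] [FunLike F A A] {α f g : A} {δ : A → A}

theorem apply_eq {s : A → A} (h : IsDividedDifference α s δ) (hfg : f - s f = α * g) :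
    δ f = g :=
  h.isRegular.left <| (h.mul_apply f).trans hfg

theorem apply_eq_zero {s : A → A} (h : IsDividedDifference α s δ) (hf : s f = f) : δ f = 0 :=
  h.apply_eq <| by rw [hf, sub_self, mul_zero]

theorem apply_add [AddHomClass F A A] {s : F} (h : IsDividedDifference α s δ) (f g : A) :
    δ (f + g) = δ f + δ g :=
  h.apply_eq <| by rw [map_add, mul_add, h.mul_apply, h.mul_apply]; ring

theorem apply_mul [MulHomClass F A A] {s : F} (h : IsDividedDifference α s δ) (f g : A) :
    δ (f * g) = δ f * g + s f * δ g :=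
  h.apply_eq <| calc
    f * g - s (f * g) = (f - s f) * g + s f * (g - s g) := by rw [map_mul]; ring
    _ = α * (δ f * g + s f * δ g) := by rw [← h.mul_apply, ← h.mul_apply]; ring

theorem apply_mul_of_fixed_left [MulHomClass F A A] {s : F} (h : IsDividedDifference α s δ)
    (hf : s f = f) (g : A) : δ (f * g) = f * δ g := by
  rw [h.apply_mul, h.apply_eq_zero hf, hf, zero_mul, zero_add]

theorem apply_mul_of_fixed_right [MulHomClass F A A] {s : F} (h : IsDividedDifference α s δ)
    (f : A) (hg : s g = g) : δ (f * g) = δ f * g := by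
  rw [mul_comm, h.apply_mul_of_fixed_left hg, mul_comm]

end IsDividedDifference

theorem isRegular_X_sub_X {σ R : Type*} [CommRing R] {i j : σ} (hij : i ≠ j) :
    IsRegular (X i - X j : MvPolynomial σ R) := by
  classical
  -- The shear `X i ↦ X i + X j` is injective and carries `X i - X j` to the regular element `X i`.
  let shear : MvPolynomial σ R →ₐ[R] MvPolynomial σ R := aeval (Function.update X i (X i + X j))
  let unshear : MvPolynomial σ R →ₐ[R] MvPolynomial σ R := aeval (Function.update X i (X i - X j))
  have unshear_comp_shear : unshear.comp shear = AlgHom.id R _ := by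
    ext k : 1
    obtain rfl | hk := eq_or_ne k i <;> simp [shear, unshear, *, hij.symm]
  have shear_injective : Function.Injective shear :=
    Function.LeftInverse.injective (g := unshear) (DFunLike.congr_fun unshear_comp_shear)
  have shear_sub : shear (X i - X j) = X i := by simp [shear, hij.symm]
  refine isLeftRegular_iff_isRegular.mp fun f g hfg ↦ shear_injective ?_
  have := congrArg shear hfg
  simpa only [map_mul, shear_sub, X_mul_cancel_left_iff] using this

theorem isRegular_two_mul_X {σ R : Type*} [CommRing R] (h2 : IsRegular (2 : R)) (i : σ) :
    IsRegular (2 * X i : MvPolynomial σ R) :=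
  (h2.monomial (m := 0)).mul isRegular_X

namespace SiegelThreefold

section Operators

variable (R : Type*) [CommRing R]

/-- The simple reflection `s₁` of the Weyl group of `GSp₄`, exchanging `x₁` and `x₂`.  The
variables `x₁, x₂, y₁, y₂` are encoded as `X 0, X 1, X 2, X 3`. -/
noncomputable def swapX : MvPolynomial (Fin 4) R →ₐ[R] MvPolynomial (Fin 4) R :=
  aeval ![X 1, X 0, X 2, X 3]

/-- The simple reflection `s₂` of the Weyl group of `GSp₄`, changing the sign of `x₂`. -/
noncomputable def negX : MvPolynomial (Fin 4) R →ₐ[R] MvPolynomial (Fin 4) R :=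
  aeval ![X 0, -X 1, X 2, X 3]

/-- The factor `Φ = x₁ - y₂` of the class of the diagonal in the Bruhat stack. -/
noncomputable def classPhi : MvPolynomial (Fin 4) R := X 0 - X 3

/-- The factor `Γ` of the class of the diagonal in the Bruhat stack. -/
noncomputable def classGamma : MvPolynomial (Fin 4) R :=
  (X 0 + X 1 + X 2 + X 3) * (X 0 * X 1 + X 2 * X 3)

theorem swapX_classGamma : swapX R (classGamma R) = classGamma R := by
  simp only [swapX, classGamma, map_add, map_mul, aeval_X, Matrix.cons_val]
  ring

theorem negX_classPhi : negX R (classPhi R) = classPhi R := by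
  simp [negX, classPhi]

variable {R} {δ₁ δ₂ : MvPolynomial (Fin 4) R → MvPolynomial (Fin 4) R}

theorem demazure₁_classPhi (h₁ : IsDividedDifference (X 0 - X 1) (swapX R) δ₁) :
    δ₁ (classPhi R) = 1 :=
  h₁.apply_eq <| by simp [swapX, classPhi]

theorem demazure₂_classGamma (h₂ : IsDividedDifference (2 * X 1) (negX R) δ₂) :
    δ₂ (classGamma R) = (X 0 + X 2) * (X 0 + X 3) :=
  h₂.apply_eq <| by
    simp only [negX, classGamma, map_add, map_mul, aeval_X, Matrix.cons_val]
    ring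

theorem demazure₁_diagonal (h₁ : IsDividedDifference (X 0 - X 1) (swapX R) δ₁) :
    δ₁ (classPhi R * classGamma R) = classGamma R := by
  rw [h₁.apply_mul_of_fixed_right _ (swapX_classGamma R), demazure₁_classPhi h₁, one_mul]

theorem demazure₂_diagonal (h₂ : IsDividedDifference (2 * X 1) (negX R) δ₂) :
    δ₂ (classPhi R * classGamma R) = classPhi R * ((X 0 + X 2) * (X 0 + X 3)) := by
  rw [h₂.apply_mul_of_fixed_left (negX_classPhi R), demazure₂_classGamma h₂]

theorem demazure₁_demazure₂_diagonal (h₁ : IsDividedDifference (X 0 - X 1) (swapX R) δ₁)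
    (h₂ : IsDividedDifference (2 * X 1) (negX R) δ₂) :
    δ₁ (δ₂ (classPhi R * classGamma R)) =
      (X 0 + X 2) * (X 0 + X 1) + (X 1 ^ 2 - X 3 ^ 2) := by
  have δ₁_sq_sub_sq : δ₁ (X 0 ^ 2 - X 3 ^ 2) = X 0 + X 1 := h₁.apply_eq <| by
    simp only [swapX, map_sub, map_pow, aeval_X, Matrix.cons_val]
    ring
  have δ₁_add : δ₁ (X 0 + X 2) = 1 := h₁.apply_eq <| by simp [swapX]
  have s₁_sq_sub_sq : swapX R (X 0 ^ 2 - X 3 ^ 2) = X 1 ^ 2 - X 3 ^ 2 := by simp [swapX]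
  calc
    δ₁ (δ₂ (classPhi R * classGamma R)) = δ₁ ((X 0 ^ 2 - X 3 ^ 2) * (X 0 + X 2)) := by
      rw [demazure₂_diagonal h₂, classPhi]
      ring_nf
    _ = (X 0 + X 2) * (X 0 + X 1) + (X 1 ^ 2 - X 3 ^ 2) := by
      rw [h₁.apply_mul, δ₁_sq_sub_sq, s₁_sq_sub_sq, δ₁_add]
      ring

theorem demazure₂_demazure₁_demazure₂_diagonal
    (h₁ : IsDividedDifference (X 0 - X 1) (swapX R) δ₁)
    (h₂ : IsDividedDifference (2 * X 1) (negX R) δ₂) :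
    δ₂ (δ₁ (δ₂ (classPhi R * classGamma R))) = X 0 + X 2 := by
  have s₂_add : negX R (X 0 + X 2) = X 0 + X 2 := by simp [negX]
  have s₂_sq_sub_sq : negX R (X 1 ^ 2 - X 3 ^ 2) = X 1 ^ 2 - X 3 ^ 2 := by simp [negX]
  have δ₂_add : δ₂ (X 0 + X 1) = 1 := h₂.apply_eq <| by
    simp only [negX, map_add, aeval_X, Matrix.cons_val]
    ring
  rw [demazure₁_demazure₂_diagonal h₁ h₂, h₂.apply_add, h₂.apply_mul_of_fixed_left s₂_add,
    h₂.apply_eq_zero s₂_sq_sub_sq, δ₂_add, mul_one, add_zero]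

end Operators

section Pullback

variable {R : Type*} [CommRing R] (p : R)

/-- The pull-back `ψ` from the Bruhat stack to the stack of flagged `G`-zips, on Chow rings. -/
noncomputable def zipPullback : MvPolynomial (Fin 4) R →ₐ[R] MvPolynomial (Fin 2) R :=
  aeval ![-X 1, -X 0, C p * X 0, C p * X 1]

theorem zipPullback_classPhi : zipPullback p (classPhi R) = -(C (p + 1) * X 1) := by
  simp only [zipPullback, classPhi, map_sub, aeval_X, Matrix.cons_val, C_add, C_1]
  ring

theorem zipPullback_classGamma :
    zipPullback p (classGamma R) = C ((p - 1) * (p ^ 2 + 1)) * ((X 0 + X 1) * (X 0 * X 1)) := by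
  simp only [zipPullback, classGamma, map_add, map_mul, aeval_X, Matrix.cons_val, C_sub, C_pow,
    C_1]
  ring

theorem zipPullback_X_zero_add_X_two : zipPullback p (X 0 + X 2) = C p * X 0 - X 1 := by
  simp only [zipPullback, map_add, aeval_X, Matrix.cons_val]
  ring

theorem zipPullback_X_zero_add_X_three : zipPullback p (X 0 + X 3) = C (p - 1) * X 1 := by
  simp only [zipPullback, map_add, aeval_X, Matrix.cons_val, C_sub, C_1]
  ring

end Pullback

end SiegelThreefold

open SiegelThreefold in
theorem stmt_14_general {R : Type*} [CommRing R] (h2 : IsRegular (2 : R)) (p : R)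
    {δ₁ δ₂ : MvPolynomial (Fin 4) R → MvPolynomial (Fin 4) R}
    (hδ₁ : ∀ f, (X 0 - X 1) * δ₁ f = f - swapX R f)
    (hδ₂ : ∀ f, (2 * X 1) * δ₂ f = f - negX R f) :
    zipPullback p (classPhi R * classGamma R) =
        -(C (p ^ 4 - 1)) * ((X 0 + X 1) * (X 0 * X 1 ^ 2))
    ∧ zipPullback p (δ₂ (classPhi R * classGamma R)) =
        -(C (p ^ 2 - 1)) * ((C p * X 0 - X 1) * X 1 ^ 2)
    ∧ zipPullback p (δ₂ (δ₁ (classPhi R * classGamma R))) =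
        C (p - 1) * ((C p * X 0 - X 1) * X 1)
    ∧ zipPullback p (δ₂ (δ₁ (δ₂ (classPhi R * classGamma R)))) = C p * X 0 - X 1 := by
  have h₁ : IsDividedDifference (X 0 - X 1) (swapX R) δ₁ := ⟨isRegular_X_sub_X (by decide), hδ₁⟩
  have h₂ : IsDividedDifference (2 * X 1) (negX R) δ₂ := ⟨isRegular_two_mul_X h2 1, hδ₂⟩
  rw [demazure₂_demazure₁_demazure₂_diagonal h₁ h₂, demazure₁_diagonal h₁,
    demazure₂_classGamma h₂, demazure₂_diagonal h₂]
  simp only [map_mul (zipPullback p), zipPullback_classPhi, zipPullback_classGamma,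
    zipPullback_X_zero_add_X_two, zipPullback_X_zero_add_X_three, and_true]
  refine ⟨?_, ?_, ?_⟩ <;> simp only [C_add, C_sub, C_mul, C_pow, C_1] <;> ring

/-- Work in `ℚ[x₁,x₂,y₁,y₂]` (variables `X 0, X 1, X 2, X 3`), with `p` an
arbitrary element of `ℚ`.  Let `δ₁, δ₂` be the Demazure operators characterized by
`(x₁ − x₂)·δ₁ f = f − f(x₂,x₁,y₁,y₂)` and `(2x₂)·δ₂ f = f − f(x₁,−x₂,y₁,y₂)`, and let
`ψ : ℚ[x₁,x₂,y₁,y₂] → ℚ[x₁,x₂]` be the algebra homomorphism with `x₁ ↦ −x₂`, `x₂ ↦ −x₁`,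
`y₁ ↦ p·x₁`, `y₂ ↦ p·x₂`.  Set `Φ := x₁ − y₂` and
`Γ := (x₁+x₂+y₁+y₂)(x₁x₂+y₁y₂)`.  Then
`ψ(ΦΓ) = −(p⁴−1)(x₁+x₂)x₁x₂²`, `ψ(δ₂(ΦΓ)) = −(p²−1)(p·x₁−x₂)x₂²`,
`ψ(δ₂δ₁(ΦΓ)) = (p−1)(p·x₁−x₂)x₂` and `ψ(δ₂δ₁δ₂(ΦΓ)) = p·x₁−x₂`. -/
theorem stmt_14 (p : ℚ)
    (δ₁ δ₂ : MvPolynomial (Fin 4) ℚ → MvPolynomial (Fin 4) ℚ)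
    (hδ₁ : ∀ f, (X 0 - X 1) * δ₁ f = f - aeval ![X 1, X 0, X 2, X 3] f)
    (hδ₂ : ∀ f, (2 * X 1) * δ₂ f = f - aeval ![X 0, -X 1, X 2, X 3] f)
    (ψ : MvPolynomial (Fin 4) ℚ →ₐ[ℚ] MvPolynomial (Fin 2) ℚ)
    (hψ : ψ = aeval ![-X 1, -X 0, C p * X 0, C p * X 1])
    (Φ Γ : MvPolynomial (Fin 4) ℚ)
    (hΦ : Φ = X 0 - X 3)
    (hΓ : Γ = (X 0 + X 1 + X 2 + X 3) * (X 0 * X 1 + X 2 * X 3)) :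
    ψ (Φ * Γ) = -(C (p ^ 4 - 1)) * ((X 0 + X 1) * (X 0 * X 1 ^ 2))
    ∧ ψ (δ₂ (Φ * Γ)) = -(C (p ^ 2 - 1)) * ((C p * X 0 - X 1) * X 1 ^ 2)
    ∧ ψ (δ₂ (δ₁ (Φ * Γ))) = C (p - 1) * ((C p * X 0 - X 1) * X 1)
    ∧ ψ (δ₂ (δ₁ (δ₂ (Φ * Γ)))) = C p * X 0 - X 1 := by
  subst hψ hΦ hΓ
  exact stmt_14_general (.of_ne_zero two_ne_zero) p hδ₁ hδ₂
end

section
/- Let d ≥ 1, let p be an indeterminate (or any element of ℚ), and let A := ℚ(p)[z_0, …, z_{d−1}]/(z_0², …, z_{d−1}²), with indices read modulo d. Then the following identities hold in A: (1) ∏_{i=0}^{d−1} (z_i − p·z_{i+1}) = (1 + (−1)^d p^d) · z_0 z_1 ⋯ z_{d−1}; and (2) (z_0 + z_1 + ⋯ + z_{d−1})^d = d! · z_0 z_1 ⋯ z_{d−1}. Consequently, with λ := −(z_0 + ⋯ + z_{d−1}), one has ∏_{i=0}^{d−1}(z_i − p z_{i+1}) = ((p^d + (−1)^d)/d!) ·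 λ^d. -/
open MvPolynomial

/-- The ring `A = ℚ[z_0,…,z_{d−1}]/(z_0²,…,z_{d−1}²)`. -/
noncomputable abbrev HBRing (d : ℕ) :=
  MvPolynomial (Fin d) ℚ ⧸
    Ideal.span {f : MvPolynomial (Fin d) ℚ | ∃ i : Fin d, f = X i ^ 2}

/-!
When every `z i` squares to zero, a monomial of `∏ (a i * z i + b i * z (i + 1))` survives only if
no variable is picked twice; around a cycle this forces all factors to contribute their first
term or all to contribute their second. The telescoping identities below make this precise: after
multiplication by `z 0`, respectively by `z n`, a single choice survives.
-/

section SquareZero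

variable {R : Type*} [CommSemiring R]

section Cyclic

variable {z : ℕ → R} {n : ℕ} (a b : ℕ → R)

theorem mul_prod_range_add_of_sq_eq_zero (hz : ∀ i < n, z i ^ 2 = 0) :
    z 0 * ∏ i ∈ Finset.range n, (a i * z i + b i * z (i + 1)) =
      (∏ i ∈ Finset.range n, b i) * ∏ i ∈ Finset.range (n + 1), z i := by
  induction n with
  | zero => simp
  | succ n ih =>
    specialize ih fun i hi => hz i (by omega)
    rw [Finset.prod_range_succ, ← mul_assoc, ih, Finset.prod_range_succ z (n + 1),
      Finset.prod_range_succ z n, Finset.prod_range_succ b n]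
    set B := ∏ i ∈ Finset.range n, b i
    set Z := ∏ i ∈ Finset.range n, z i
    calc B * (Z * z n) * (a n * z n + b n * z (n + 1))
        = B * Z * a n * z n ^ 2 + B * b n * (Z * z n * z (n + 1)) := by ring
      _ = B * b n * (Z * z n * z (n + 1)) := by rw [hz n n.lt_succ_self, mul_zero, zero_add]

theorem prod_range_add_mul_of_sq_eq_zero (hz : ∀ i < n, z (i + 1) ^ 2 = 0) :
    (∏ i ∈ Finset.range n, (a i * z i + b i * z (i + 1))) * z n =
      (∏ i ∈ Finset.range n, a i) * ∏ i ∈ Finset.range (n + 1), z i := by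
  induction n with
  | zero => simp
  | succ n ih =>
    specialize ih fun i hi => hz i (by omega)
    rw [Finset.prod_range_succ, Finset.prod_range_succ z (n + 1), Finset.prod_range_succ a n]
    set P := ∏ i ∈ Finset.range n, (a i * z i + b i * z (i + 1))
    calc P * (a n * z n + b n * z (n + 1)) * z (n + 1)
        = a n * (P * z n) * z (n + 1) + P * b n * z (n + 1) ^ 2 := by ring
      _ = a n * (P * z n) * z (n + 1) := by rw [hz n n.lt_succ_self, mul_zero, add_zero]
      _ = _ := by rw [ih]; ring

theorem prod_range_add_of_sq_eq_zero_of_cyclic {d : ℕ} (hd : d ≠ 0)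
    (hz : ∀ i < d, z i ^ 2 = 0) (hcyc : z d = z 0) :
    ∏ i ∈ Finset.range d, (a i * z i + b i * z (i + 1)) =
      (∏ i ∈ Finset.range d, a i + ∏ i ∈ Finset.range d, b i) * ∏ i ∈ Finset.range d, z i := by
  obtain ⟨n, rfl⟩ := Nat.exists_eq_succ_of_ne_zero hd
  have hfirst := prod_range_add_mul_of_sq_eq_zero a b fun i (hi : i < n) => hz (i + 1) (by omega)
  have hsecond := mul_prod_range_add_of_sq_eq_zero a b fun i (hi : i < n) => hz i (by omega)
  rw [Nat.succ_eq_add_one] at hcyc ⊢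
  rw [Finset.prod_range_succ, hcyc, Finset.prod_range_succ a, Finset.prod_range_succ b]
  set P := ∏ i ∈ Finset.range n, (a i * z i + b i * z (i + 1))
  calc P * (a n * z n + b n * z 0)
      = a n * (P * z n) + b n * (z 0 * P) := by ring
    _ = _ := by rw [hfirst, hsecond]; ring

end Cyclic

theorem add_pow_succ_of_sq_eq_zero (x : R) {y : R} (hy : y ^ 2 = 0) (n : ℕ) :
    (x + y) ^ (n + 1) = x ^ (n + 1) + (n + 1) * x ^ n * y := by
  obtain ⟨k, hk⟩ := Polynomial.powAddExpansion x y (n + 1)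
  simpa [hy] using hk

variable {ι : Type*} {s : Finset ι} {f : ι → R}

theorem sum_pow_card_succ_eq_zero_of_sq_eq_zero (hf : ∀ i ∈ s, f i ^ 2 = 0) :
    (∑ i ∈ s, f i) ^ (s.card + 1) = 0 := by
  induction s using Finset.cons_induction with
  | empty => simp
  | cons j s hj ih =>
    rw [Finset.forall_mem_cons] at hf
    rw [Finset.sum_cons, Finset.card_cons, add_comm (f j), add_pow_succ_of_sq_eq_zero _ hf.1,
      pow_succ _ (s.card + 1), ih hf.2]
    ring

theorem sum_pow_card_of_sq_eq_zero (hf : ∀ i ∈ s, f i ^ 2 = 0) :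
    (∑ i ∈ s, f i) ^ s.card = s.card.factorial * ∏ i ∈ s, f i := by
  induction s using Finset.cons_induction with
  | empty => simp
  | cons j s hj ih =>
    rw [Finset.forall_mem_cons] at hf
    rw [Finset.sum_cons, Finset.prod_cons, Finset.card_cons, add_comm (f j),
      add_pow_succ_of_sq_eq_zero _ hf.1, sum_pow_card_succ_eq_zero_of_sq_eq_zero hf.2, ih hf.2,
      Nat.factorial_succ]
    push_cast
    ring

end SquareZero

theorem prod_range_sub_smul_of_sq_eq_zero_of_cyclic {K A : Type*} [CommRing K] [CommRing A]
    [Algebra K A] {d : ℕ} (hd : d ≠ 0) (p : K) {z : ℕ → A} (hz : ∀ i < d, z i ^ 2 = 0)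
    (hcyc : z d = z 0) :
    ∏ i ∈ Finset.range d, (z i - p • z (i + 1)) =
      (1 + (-1) ^ d * p ^ d) • ∏ i ∈ Finset.range d, z i := by
  have h := prod_range_add_of_sq_eq_zero_of_cyclic (fun _ => 1) (fun _ => -algebraMap K A p)
    hd hz hcyc
  simpa [Algebra.smul_def, ← sub_eq_add_neg, ← mul_pow] using h

theorem stmt_16_general {K A : Type*} [Field K] [CommRing A] [Algebra K A] {d : ℕ} (hd : d ≠ 0)
    (hfact : (d.factorial : K) ≠ 0) (p : K) {z : ℕ → A} (hz : ∀ i < d, z i ^ 2 = 0)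
    (hcyc : z d = z 0) :
    (∏ i ∈ Finset.range d, (z i - p • z (i + 1)) =
        (1 + (-1) ^ d * p ^ d) • ∏ i ∈ Finset.range d, z i) ∧
      ((∑ i ∈ Finset.range d, z i) ^ d = (d.factorial : K) • ∏ i ∈ Finset.range d, z i) ∧
      (∏ i ∈ Finset.range d, (z i - p • z (i + 1)) =
        ((p ^ d + (-1) ^ d) / (d.factorial : K)) • (-(∑ i ∈ Finset.range d, z i)) ^ d) := by
  have hprod := prod_range_sub_smul_of_sq_eq_zero_of_cyclic hd p hz hcyc
  have hsum : (∑ i ∈ Finset.range d, z i) ^ d =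
      (d.factorial : K) • ∏ i ∈ Finset.range d, z i := by
    simpa [Nat.cast_smul_eq_nsmul] using
      sum_pow_card_of_sq_eq_zero fun i hi => hz i (Finset.mem_range.mp hi)
  have hlambda : (-(∑ i ∈ Finset.range d, z i)) ^ d =
      ((-1) ^ d * (d.factorial : K)) • ∏ i ∈ Finset.range d, z i := by
    rw [neg_pow, hsum, mul_smul, Algebra.smul_def ((-1 : K) ^ d)]
    simp
  have hsign : (-1 : K) ^ d * (-1) ^ d = 1 := by rw [← mul_pow]; simp
  refine ⟨hprod, hsum, ?_⟩
  rw [hprod, hlambda, smul_smul]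
  congr 1
  field_simp
  linear_combination -hsign

theorem HBRing.mk_X_sq {d : ℕ} (i : Fin d) :
    (Ideal.Quotient.mk _ (X i) : HBRing d) ^ 2 = 0 := by
  rw [← map_pow]
  exact Ideal.Quotient.eq_zero_iff_mem.mpr (Ideal.subset_span ⟨i, rfl⟩)

/-- Let `d ≥ 1`, `p ∈ ℚ`, and `A := ℚ[z_0,…,z_{d−1}]/(z_0²,…,z_{d−1}²)`,
indices read modulo `d`.  Then in `A`:
(1) `∏_{i=0}^{d−1} (z_i − p·z_{i+1}) = (1 + (−1)^d·p^d) · z_0⋯z_{d−1}`;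
(2) `(z_0 + ⋯ + z_{d−1})^d = d! · z_0⋯z_{d−1}`; and consequently, with
`λ := −(z_0 + ⋯ + z_{d−1})`, one has
`∏_{i=0}^{d−1} (z_i − p·z_{i+1}) = ((p^d + (−1)^d)/d!) · λ^d`. -/
theorem stmt_16 (d : ℕ) (hd : 1 ≤ d) (p : ℚ)
    (z : ℕ → HBRing d)
    (hz : ∀ k : ℕ, z k = Ideal.Quotient.mk _ (X ⟨k % d, Nat.mod_lt k hd⟩)) :
    (∏ i ∈ Finset.range d, (z i - p • z (i + 1))
        = (1 + (-1 : ℚ) ^ d * p ^ d) • ∏ i ∈ Finset.range d, z i)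
    ∧ ((∑ i ∈ Finset.range d, z i) ^ d
        = (d.factorial : ℚ) • ∏ i ∈ Finset.range d, z i)
    ∧ (∏ i ∈ Finset.range d, (z i - p • z (i + 1))
        = ((p ^ d + (-1 : ℚ) ^ d) / (d.factorial : ℚ))
            • (-(∑ i ∈ Finset.range d, z i)) ^ d) :=
  stmt_16_general (Nat.one_le_iff_ne_zero.mp hd) (mod_cast d.factorial_ne_zero) p
    (fun i _ => by rw [hz, HBRing.mk_X_sq]) (by simp [hz])
end
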